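/- arXiv:1401.1530 — 4 statements merged into one kernel-verified Lean document; each statement's English description precedes it below -/
import Mathlib

section
/- Let d ≥ 1 be an integer and let p be a real number with p > max(d,2). For every ε > 0 there exists a constant C_ε > 0, depending only on p, d and ε, such that for all f, g ∈ C_c^∞(ℝ^d) one has ∫_{ℝ^d} |f(x) g(x)|² dx ≤ ε (‖g‖²_{L²(ℝ^d)} + ‖∇g‖²_{L²(ℝ^d)}) + C_ε ‖f‖_{L^p(ℝ^d)}^{2p/(p−d)} ‖g‖²_{L²(ℝ^d)}. -/
open MeasureTheory
open scoped ENNReal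

noncomputable section

section GagliardoNirenberg

open Module

theorem sq_lintegral_mul_le {α : Type*} [MeasurableSpace α] {μ : Measure α} {u v : α → ℝ≥0∞}
    (hu : AEMeasurable u μ) (hv : AEMeasurable v μ) :
    (∫⁻ x, u x * v x ∂μ) ^ 2 ≤ (∫⁻ x, u x ^ 2 ∂μ) * ∫⁻ x, v x ^ 2 ∂μ := by
  have h := ENNReal.lintegral_mul_le_Lp_mul_Lq μ Real.HolderConjugate.two_two hu hv
  simp only [ENNReal.rpow_two, Pi.mul_apply] at h
  calc (∫⁻ x, u x * v x ∂μ) ^ 2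
      ≤ ((∫⁻ x, u x ^ 2 ∂μ) ^ (1 / 2 : ℝ) * (∫⁻ x, v x ^ 2 ∂μ) ^ (1 / 2 : ℝ)) ^ 2 := by gcongr
    _ = _ := by
      rw [mul_pow, ← ENNReal.rpow_two, ← ENNReal.rpow_two, ← ENNReal.rpow_mul, ← ENNReal.rpow_mul]
      norm_num

variable {E : Type*} [NormedAddCommGroup E] [InnerProductSpace ℝ E] [FiniteDimensional ℝ E]
  [MeasurableSpace E] [BorelSpace E]

theorem sq_lintegral_enorm_fderiv_pow_le {g : E → ℝ} (hg : ContDiff ℝ 1 g) (n : ℕ) :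
    (∫⁻ x, ‖fderiv ℝ (fun y ↦ g y ^ (n + 1)) x‖ₑ) ^ 2 ≤
      (n + 1 : ℝ≥0∞) ^ 2 * ((∫⁻ x, ‖g x‖ₑ ^ (2 * n)) * ∫⁻ x, ‖fderiv ℝ g x‖ₑ ^ 2) := by
  have hm : Measurable fun x ↦ ‖g x‖ₑ ^ n := (hg.continuous.measurable.enorm).pow_const n
  have hm' : Measurable fun x ↦ ‖fderiv ℝ g x‖ₑ :=
    (hg.continuous_fderiv one_ne_zero).measurable.enorm
  have h1 (x : E) : ‖fderiv ℝ (fun y ↦ g y ^ (n + 1)) x‖ₑ =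
      (n + 1 : ℝ≥0∞) * (‖g x‖ₑ ^ n * ‖fderiv ℝ g x‖ₑ) := by
    rw [fderiv_fun_pow _ (hg.differentiable one_ne_zero x), enorm_smul, nsmul_eq_mul, enorm_mul,
      enorm_pow, Nat.add_sub_cancel, mul_assoc]
    congr 1
    rw [Real.enorm_natCast]
    push_cast
    rfl
  simp_rw [h1]
  rw [lintegral_const_mul _ (by fun_prop), mul_pow]
  gcongr
  refine (sq_lintegral_mul_le hm.aemeasurable hm'.aemeasurable).trans_eq ?_
  simp_rw [← pow_mul, mul_comm n 2]

theorem enorm_le_lintegral_enorm_fderiv_of_finrank_eq_one (hE : finrank ℝ E = 1) {u : E → ℝ}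
    (hu : ContDiff ℝ 1 u) (h2u : HasCompactSupport u) (x : E) :
    ‖u x‖ₑ ≤ ∫⁻ y, ‖fderiv ℝ u y‖ₑ := by
  have e : ℝ ≃ₗᵢ[ℝ] E := (stdOrthonormalBasis ℝ ℝ).equiv (stdOrthonormalBasis ℝ E)
    (finCongr (by simp [hE]))
  have hue : ContDiff ℝ 1 (u ∘ e) := hu.comp e.contDiff
  calc ‖u x‖ₑ = ‖(u ∘ e) (e.symm x)‖ₑ := by simp
    _ ≤ ∫⁻ t in Set.Iic (e.symm x), ‖deriv (u ∘ e) t‖ₑ :=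
      (h2u.comp_homeomorph e.toHomeomorph).enorm_le_lintegral_Ici_deriv hue _
    _ ≤ ∫⁻ t, ‖deriv (u ∘ e) t‖ₑ := setLIntegral_le_lintegral _ _
    _ ≤ ∫⁻ t, ‖fderiv ℝ u (e t)‖ₑ := by
      gcongr with t
      have hd := ((hu.differentiable one_ne_zero (e t)).hasFDerivAt.comp_hasDerivAt t
        (e.toContinuousLinearEquiv.hasFDerivAt.hasDerivAt)).deriv
      change deriv (u ∘ e) t = _ at hd
      rw [hd]
      refine (ContinuousLinearMap.le_opENorm _ _).trans_eq ?_
      simp [enorm_eq_nnnorm]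
    _ = ∫⁻ y, ‖fderiv ℝ u y‖ₑ :=
      e.measurePreserving.lintegral_comp
        (hu.continuous_fderiv one_ne_zero).measurable.enorm

theorem lintegral_enorm_pow_le_of_finrank_eq_one (hE : finrank ℝ E = 1) (n : ℕ) {g : E → ℝ}
    (hg : ContDiff ℝ 1 g) (h2g : HasCompactSupport g) :
    ∫⁻ x, ‖g x‖ₑ ^ (2 * (n + 1)) ≤
      (4 * ((∫⁻ x, ‖g x‖ₑ ^ 2) * ∫⁻ x, ‖fderiv ℝ g x‖ₑ ^ 2)) ^ ((n : ℝ) / 2) *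
        ∫⁻ x, ‖g x‖ₑ ^ 2 := by
  set Q := 4 * ((∫⁻ x, ‖g x‖ₑ ^ 2) * ∫⁻ x, ‖fderiv ℝ g x‖ₑ ^ 2)
  have hsup (x : E) : ‖g x‖ₑ ^ (2 * n) ≤ Q ^ ((n : ℝ) / 2) := by
    have h1 : ‖g x ^ 2‖ₑ ≤ ∫⁻ y, ‖fderiv ℝ (fun z ↦ g z ^ 2) y‖ₑ :=
      enorm_le_lintegral_enorm_fderiv_of_finrank_eq_one hE (hg.pow 2)
        (h2g.comp_left (g := fun t : ℝ ↦ t ^ 2) (by simp)) x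
    have h2 : (‖g x‖ₑ ^ 2) ^ 2 ≤ Q := by
      rw [← enorm_pow]
      refine (pow_le_pow_left' h1 2).trans
        ((sq_lintegral_enorm_fderiv_pow_le hg 1).trans_eq ?_)
      norm_num [Q]
    calc ‖g x‖ₑ ^ (2 * n) = ((‖g x‖ₑ ^ 2) ^ 2) ^ ((n : ℝ) / 2) := by
          rw [← ENNReal.rpow_natCast, ← ENNReal.rpow_natCast, ← ENNReal.rpow_natCast,
            ← ENNReal.rpow_mul, ← ENNReal.rpow_mul]
          congr 1
          push_cast
          ring
      _ ≤ _ := by gcongr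
  rw [← lintegral_const_mul _ (hg.continuous.measurable.enorm.pow_const 2)]
  gcongr with x
  rw [mul_add, pow_add, mul_one]
  gcongr
  exact hsup x

theorem exists_lintegral_enorm_pow_le_of_finrank_eq_two (hE : finrank ℝ E = 2) (n : ℕ) :
    ∃ K : NNReal, ∀ g : E → ℝ, ContDiff ℝ 1 g → HasCompactSupport g →
      ∫⁻ x, ‖g x‖ₑ ^ (2 * (n + 1)) ≤
        K * ((∫⁻ x, ‖fderiv ℝ g x‖ₑ ^ 2) ^ n * ∫⁻ x, ‖g x‖ₑ ^ 2) := by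
  induction n with
  | zero => exact ⟨1, fun g _ _ ↦ by simp⟩
  | succ n ih =>
    obtain ⟨K, hK⟩ := ih
    refine ⟨lintegralPowLePowLIntegralFDerivConst (volume : Measure E) 2 * (n + 2) ^ 2 * K,
      fun g hg h2g ↦ ?_⟩
    have hconj : (finrank ℝ E : ℝ).HolderConjugate 2 := by
      rw [hE]; exact_mod_cast Real.HolderConjugate.two_two
    have h1 := lintegral_pow_le_pow_lintegral_fderiv (volume : Measure E) (hg.pow (n + 2))
      (h2g.comp_left (g := fun t : ℝ ↦ t ^ (n + 2)) (by simp)) hconj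
    have h2 := sq_lintegral_enorm_fderiv_pow_le hg (n + 1)
    simp only [ENNReal.rpow_two, enorm_pow, ← pow_mul] at h1
    calc ∫⁻ x, ‖g x‖ₑ ^ (2 * (n + 1 + 1)) = ∫⁻ x, ‖g x‖ₑ ^ ((n + 2) * 2) := by
          simp_rw [mul_comm 2]
      _ ≤ _ := h1
      _ ≤ _ := mul_le_mul_right h2 _
      _ ≤ lintegralPowLePowLIntegralFDerivConst (volume : Measure E) 2 *
          (((n + 1 : ℕ) + 1 : ℝ≥0∞) ^ 2 * (K * ((∫⁻ x, ‖fderiv ℝ g x‖ₑ ^ 2) ^ n *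
            ∫⁻ x, ‖g x‖ₑ ^ 2) * ∫⁻ x, ‖fderiv ℝ g x‖ₑ ^ 2)) := by
        gcongr
        exact hK g hg h2g
      _ = _ := by push_cast; ring

theorem exists_lintegral_enorm_rpow_le_of_two_lt_finrank (hE : 2 < finrank ℝ E) :
    ∃ K : NNReal, ∀ g : E → ℝ, ContDiff ℝ 1 g → HasCompactSupport g →
      ∫⁻ x, ‖g x‖ₑ ^ (2 * finrank ℝ E / (finrank ℝ E - 2) : ℝ) ≤
        K * (∫⁻ x, ‖fderiv ℝ g x‖ₑ ^ 2) ^ (finrank ℝ E / (finrank ℝ E - 2) : ℝ) := by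
  have hd : (2 : ℝ) < finrank ℝ E := by exact_mod_cast hE
  set d : ℝ := ((finrank ℝ E : ℕ) : ℝ)
  have hd2 : 0 < d - 2 := by linarith
  have hq : 0 < 2 * d / (d - 2) := by positivity
  set q : NNReal := ⟨2 * d / (d - 2), hq.le⟩
  have hqd : (q : ℝ) = 2 * d / (d - 2) := rfl
  have hq0 : q ≠ 0 := by
    rw [← NNReal.coe_ne_zero, hqd]; exact hq.ne'
  set K := eLpNormLESNormFDerivOfEqInnerConst (volume : Measure E) ((2 : NNReal) : ℝ)
  refine ⟨K ^ (q : ℝ), fun g hg h2g ↦ ?_⟩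
  have h := eLpNorm_le_eLpNorm_fderiv_of_eq_inner (volume : Measure E) hg h2g
    (p := 2) (p' := q) (by norm_num) (by omega) (by
      rw [hqd]
      change (2 * d / (d - 2))⁻¹ = _ - d⁻¹
      push_cast
      field_simp)
  have h2 : eLpNorm (fderiv ℝ g) (2 : NNReal) volume ^ (2 : ℝ) =
      ∫⁻ x, ‖fderiv ℝ g x‖ₑ ^ 2 := by
    simpa using eLpNorm_nnreal_pow_eq_lintegral (μ := (volume : Measure E))
      (f := fderiv ℝ g) (p := 2) two_ne_zero
  rw [← hqd, ← eLpNorm_nnreal_pow_eq_lintegral hq0, ← h2, ← ENNReal.rpow_mul,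
    ENNReal.coe_rpow_of_nonneg _ q.coe_nonneg]
  calc _ ≤ _ := ENNReal.rpow_le_rpow h q.coe_nonneg
    _ = _ := by
      rw [ENNReal.mul_rpow_of_nonneg _ _ q.coe_nonneg, hqd]
      congr 2
      ring

/-- A Gagliardo–Nirenberg inequality with scaling-invariant exponents, for some exponent `q`
which is large enough in terms of `p`. -/
theorem exists_gagliardoNirenberg {p : ℝ} (hp : 2 < p) (hE : 1 ≤ finrank ℝ E)
    (hEp : finrank ℝ E < p) :
    ∃ q : ℝ, 2 < q ∧ 4 ≤ (p - 2) * (q - 2) ∧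
      0 ≤ q / 2 - finrank ℝ E * (q - 2) / 4 ∧ ∃ K : NNReal, ∀ g : E → ℝ,
      ContDiff ℝ 1 g → HasCompactSupport g →
      ∫⁻ x, ‖g x‖ₑ ^ q ≤ K * ((∫⁻ x, ‖fderiv ℝ g x‖ₑ ^ 2) ^ (finrank ℝ E * (q - 2) / 4) *
        (∫⁻ x, ‖g x‖ₑ ^ 2) ^ (q / 2 - finrank ℝ E * (q - 2) / 4)) := by
  have hp2 : 0 < p - 2 := by linarith
  obtain ⟨n, hn⟩ := exists_nat_gt (2 / (p - 2))
  have hn0 : (0 : ℝ) < n := lt_trans (by positivity) hn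
  have hpn : 4 ≤ (p - 2) * ((2 * (n + 1) : ℕ) - 2 : ℝ) := by
    rw [div_lt_iff₀ hp2] at hn
    push_cast
    linarith
  have hn2 : (2 : ℝ) < (2 * (n + 1) : ℕ) := by push_cast; linarith
  obtain hd | hd | hd : finrank ℝ E = 1 ∨ finrank ℝ E = 2 ∨ 2 < finrank ℝ E := by omega
  · refine ⟨(2 * (n + 1) : ℕ), hn2, hpn, by rw [hd]; push_cast; linarith, 4 ^ ((n : ℝ) / 2), fun g hg h2g ↦ ?_⟩
    simp_rw [ENNReal.rpow_natCast]
    refine (lintegral_enorm_pow_le_of_finrank_eq_one hd n hg h2g).trans_eq ?_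
    have hn' : (0 : ℝ) ≤ (n : ℝ) / 2 := by positivity
    rw [ENNReal.mul_rpow_of_nonneg _ _ hn', ENNReal.mul_rpow_of_nonneg _ _ hn', mul_assoc,
      mul_right_comm, hd, ENNReal.coe_rpow_of_nonneg _ hn', mul_comm (_ * _)]
    nth_rw 2 [← ENNReal.rpow_one (∫⁻ x, ‖g x‖ₑ ^ 2)]
    rw [← ENNReal.rpow_add_of_nonneg _ _ hn' zero_le_one]
    push_cast
    congr 3 <;> ring
  · obtain ⟨K, hK⟩ := exists_lintegral_enorm_pow_le_of_finrank_eq_two hd n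
    refine ⟨(2 * (n + 1) : ℕ), hn2, hpn, by rw [hd]; push_cast; linarith, K, fun g hg h2g ↦ ?_⟩
    simp_rw [ENNReal.rpow_natCast]
    refine (hK g hg h2g).trans_eq ?_
    rw [hd, ← ENNReal.rpow_natCast _ n]
    nth_rw 1 [← ENNReal.rpow_one (∫⁻ x, ‖g x‖ₑ ^ 2)]
    push_cast
    congr 3 <;> ring
  · obtain ⟨K, hK⟩ := exists_lintegral_enorm_rpow_le_of_two_lt_finrank hd
    have hd' : (2 : ℝ) < finrank ℝ E := by exact_mod_cast hd
    set d : ℝ := ((finrank ℝ E : ℕ) : ℝ)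
    have hd2 : 0 < d - 2 := by linarith
    have hq : 2 * d / (d - 2) - 2 = 4 / (d - 2) := by field_simp; ring
    have hb : 2 * d / (d - 2) / 2 - d * (2 * d / (d - 2) - 2) / 4 = 0 := by
      rw [hq]; field_simp; ring
    refine ⟨2 * d / (d - 2), ?_, ?_, hb.ge, K, fun g hg h2g ↦ (hK g hg h2g).trans_eq ?_⟩
    · have : 0 < 4 / (d - 2) := by positivity
      linarith
    · rw [hq, ← mul_div_assoc, le_div_iff₀ hd2]
      linarith
    · rw [hb, hq, show d * (4 / (d - 2)) / 4 = d / (d - 2) by field_simp, ENNReal.rpow_zero, mul_one]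

theorem exists_lintegral_enorm_mul_sq_le {p : ℝ} (hp : 2 < p) (hE : 1 ≤ finrank ℝ E)
    (hEp : finrank ℝ E < p) :
    ∃ K : NNReal, ∀ f g : E → ℝ, Measurable f → ContDiff ℝ 1 g → HasCompactSupport g →
      ∫⁻ x, ‖f x * g x‖ₑ ^ 2 ≤ (∫⁻ x, ‖f x‖ₑ ^ p) ^ (2 / p) *
        (K * ((∫⁻ x, ‖fderiv ℝ g x‖ₑ ^ 2) ^ (finrank ℝ E / p) *
          (∫⁻ x, ‖g x‖ₑ ^ 2) ^ (1 - finrank ℝ E / p))) := by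
  obtain ⟨q, hq, hpq, hqE, K, hK⟩ := exists_gagliardoNirenberg hp hE hEp
  set d : ℝ := ((finrank ℝ E : ℕ) : ℝ)
  have hp0 : 0 < p := by linarith
  have hp2 : 0 < p - 2 := by linarith
  have hq2 : 0 < q - 2 := by linarith
  set s : ℝ := 4 / (p * (q - 2)) with hs
  set t : ℝ := 1 - 2 / p - s with ht
  have hs0 : 0 ≤ s := by positivity
  have ht0 : 0 ≤ t := by
    have : t = ((p - 2) * (q - 2) - 4) / (p * (q - 2)) := by rw [ht, hs]; field_simp
    rw [this]
    exact div_nonneg (by linarith) (by positivity)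
  have hqs : q * s + 2 * t = 2 := by rw [ht, hs]; field_simp; ring
  have hds : d * (q - 2) / 4 * s = d / p := by rw [hs]; field_simp
  have hexp : (q / 2 - d * (q - 2) / 4) * s + t = 1 - d / p := by linarith
  refine ⟨K ^ s, fun f g hf hg h2g ↦ ?_⟩
  have hgm : Measurable g := hg.continuous.measurable
  have hHolder := ENNReal.lintegral_prod_norm_pow_le (μ := (volume : Measure E)) Finset.univ
    (f := ![fun x ↦ ‖f x‖ₑ ^ p, fun x ↦ ‖g x‖ₑ ^ q, fun x ↦ ‖g x‖ₑ ^ 2]) (p := ![2 / p, s, t])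
    (by
      intro i _
      fin_cases i
      · exact (hf.enorm.pow_const p).aemeasurable
      · exact (hgm.enorm.pow_const q).aemeasurable
      · exact (hgm.enorm.pow_const 2).aemeasurable)
    (by simp [Fin.sum_univ_three, ht])
    (by
      intro i _
      fin_cases i
      · exact (by positivity : 0 ≤ 2 / p)
      · exact hs0
      · exact ht0)
  simp only [Fin.prod_univ_three, Matrix.cons_val] at hHolder
  set A := ∫⁻ x, ‖g x‖ₑ ^ 2
  set B := ∫⁻ x, ‖fderiv ℝ g x‖ₑ ^ 2
  calc ∫⁻ x, ‖f x * g x‖ₑ ^ 2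
      = ∫⁻ x, (‖f x‖ₑ ^ p) ^ (2 / p) * (‖g x‖ₑ ^ q) ^ s * (‖g x‖ₑ ^ 2) ^ t := by
        refine lintegral_congr fun x ↦ ?_
        rw [enorm_mul, mul_pow, mul_assoc, ← ENNReal.rpow_two, ← ENNReal.rpow_two,
          ← ENNReal.rpow_mul, ← ENNReal.rpow_mul, ← ENNReal.rpow_mul,
          ← ENNReal.rpow_add_of_nonneg _ _ (by positivity) (by positivity), hqs,
          mul_div_cancel₀ _ hp0.ne']
    _ ≤ _ := hHolder
    _ ≤ (∫⁻ x, ‖f x‖ₑ ^ p) ^ (2 / p) *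
          (K * (B ^ (d * (q - 2) / 4) * A ^ (q / 2 - d * (q - 2) / 4))) ^ s * A ^ t := by
        gcongr
        exact hK g hg h2g
    _ = _ := by
        rw [ENNReal.mul_rpow_of_nonneg _ _ hs0, ENNReal.mul_rpow_of_nonneg _ _ hs0,
          ← ENNReal.rpow_mul, ← ENNReal.rpow_mul, hds, ← hexp,
          ENNReal.rpow_add_of_nonneg _ _ (mul_nonneg hqE hs0) ht0,
          ENNReal.coe_rpow_of_nonneg _ hs0]
        ring

theorem lintegral_enorm_rpow_lt_top {F : Type*} [NormedAddCommGroup F] {h : E → F}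
    (hc : Continuous h) (hs : HasCompactSupport h) {r : ℝ} (hr : 0 < r) :
    ∫⁻ x, ‖h x‖ₑ ^ r < ∞ := by
  have := lintegral_rpow_enorm_lt_top_of_eLpNorm_lt_top (p := ENNReal.ofReal r) (by simpa)
    ENNReal.ofReal_ne_top (hc.memLp_of_hasCompactSupport (μ := volume) hs).eLpNorm_lt_top
  rwa [ENNReal.toReal_ofReal hr.le] at this

end GagliardoNirenberg

/-- Young's inequality, used to absorb the factor `W`. -/
theorem mul_rpow_mul_rpow_le {θ ε : ℝ} (hθ : 0 ≤ θ) (hθ1 : θ < 1) (hε : 0 < ε) {L W A : ℝ}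
    (hL : 0 ≤ L) (hW : 0 ≤ W) (hA : 0 ≤ A) :
    L * (W ^ θ * A ^ (1 - θ)) ≤ ε * W + (L * ε ^ (-θ)) ^ (1 / (1 - θ)) * A := by
  have h1 : 0 < 1 - θ := by linarith
  set M := (L * ε ^ (-θ)) ^ (1 / (1 - θ))
  have hM : 0 ≤ M := by positivity
  have hMθ : M ^ (1 - θ) = L * ε ^ (-θ) := by
    rw [← Real.rpow_mul (by positivity), one_div_mul_cancel h1.ne', Real.rpow_one]
  calc L * (W ^ θ * A ^ (1 - θ)) = (ε * W) ^ θ * (M * A) ^ (1 - θ) := by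
        rw [Real.mul_rpow hε.le hW, Real.mul_rpow hM hA, hMθ, Real.rpow_neg hε.le]
        have : ε ^ θ ≠ 0 := (Real.rpow_pos_of_pos hε θ).ne'
        field_simp
    _ ≤ θ * (ε * W) + (1 - θ) * (M * A) :=
        Real.geom_mean_le_arith_mean2_weighted hθ h1.le (by positivity) (by positivity) (by ring)
    _ ≤ 1 * (ε * W) + 1 * (M * A) := by
        gcongr
        linarith
    _ = _ := by ring

theorem interpolation_inequality (d : ℕ) (hd : 1 ≤ d) (p : ℝ)
    (hp : max (d : ℝ) 2 < p) :
    ∀ ε : ℝ, 0 < ε → ∃ C : ℝ, 0 < C ∧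
      ∀ f g : EuclideanSpace ℝ (Fin d) → ℝ,
        ContDiff ℝ (⊤ : ℕ∞) f → HasCompactSupport f →
        ContDiff ℝ (⊤ : ℕ∞) g → HasCompactSupport g →
        ∫ x, |f x * g x| ^ 2 ≤
          ε * ((∫ x, g x ^ 2) + ∫ x, ‖fderiv ℝ g x‖ ^ 2) +
            C * ((∫ x, |f x| ^ p) ^ (1 / p)) ^ (2 * p / (p - (d : ℝ))) *
              ∫ x, g x ^ 2 := by
  intro ε hε
  obtain ⟨hdp, hp2⟩ := max_lt_iff.1 hp
  have hp0 : 0 < p := by linarith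
  have hpd : 0 < p - d := by linarith
  have hfr : Module.finrank ℝ (EuclideanSpace ℝ (Fin d)) = d := by simp
  obtain ⟨K, hK⟩ := exists_lintegral_enorm_mul_sq_le (E := EuclideanSpace ℝ (Fin d)) hp2
    (by rwa [hfr]) (by rwa [hfr])
  rw [hfr] at hK
  have hθ : 0 ≤ (d : ℝ) / p := by positivity
  have hθ1 : (d : ℝ) / p < 1 := (div_lt_one hp0).2 hdp
  set θ : ℝ := (d : ℝ) / p with hθ_def
  refine ⟨((K + 1) * ε ^ (-θ)) ^ (1 / (1 - θ)), by positivity, fun f g hf h2f hg h2g ↦ ?_⟩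
  have hg1 : ContDiff ℝ 1 g := hg.of_le (by exact_mod_cast le_top)
  have hg' : Continuous (fderiv ℝ g) := hg1.continuous_fderiv one_ne_zero
  have hN := lintegral_enorm_rpow_lt_top hf.continuous h2f hp0
  have hA := lintegral_enorm_rpow_lt_top hg.continuous h2g two_pos
  have hB := lintegral_enorm_rpow_lt_top hg' (h2g.fderiv ℝ) two_pos
  simp_rw [ENNReal.rpow_two] at hA hB
  have hfg : ∫ x, |f x * g x| ^ 2 = (∫⁻ x, ‖f x * g x‖ₑ ^ 2).toReal := by
    have hm : Measurable fun x ↦ f x * g x := (hf.continuous.mul hg.continuous).measurable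
    rw [← integral_toReal (hm.enorm.pow_const 2).aemeasurable (.of_forall fun x ↦ by finiteness)]
    simp
  have hNr : ∫ x, |f x| ^ p = (∫⁻ x, ‖f x‖ₑ ^ p).toReal := by
    rw [← integral_toReal ((hf.continuous.measurable.enorm.pow_const p).aemeasurable)
      (.of_forall fun x ↦ ENNReal.rpow_lt_top_of_nonneg hp0.le enorm_ne_top)]
    simp [← ENNReal.toReal_rpow]
  have hAr : ∫ x, g x ^ 2 = (∫⁻ x, ‖g x‖ₑ ^ 2).toReal := by
    rw [← integral_toReal ((hg.continuous.measurable.enorm.pow_const 2).aemeasurable) (by simp)]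
    simp
  have hBr : ∫ x, ‖fderiv ℝ g x‖ ^ 2 = (∫⁻ x, ‖fderiv ℝ g x‖ₑ ^ 2).toReal := by
    rw [← integral_toReal ((hg'.measurable.enorm.pow_const 2).aemeasurable) (by simp)]
    simp
  have hmain := ENNReal.toReal_mono (by finiteness) (hK f g hf.continuous.measurable hg1 h2g)
  simp only [ENNReal.toReal_mul, ← ENNReal.toReal_rpow, ENNReal.coe_toReal, ← hfg, ← hNr, ← hAr,
    ← hBr] at hmain
  have hN0 : 0 ≤ ∫ x, |f x| ^ p := by rw [hNr]; positivity
  have hA0 : 0 ≤ ∫ x, g x ^ 2 := by rw [hAr]; positivity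
  have hB0 : 0 ≤ ∫ x, ‖fderiv ℝ g x‖ ^ 2 := by rw [hBr]; positivity
  set N := ∫ x, |f x| ^ p
  set A := ∫ x, g x ^ 2
  set B := ∫ x, ‖fderiv ℝ g x‖ ^ 2
  have hexp : 1 / (1 - θ) = p / (p - d) := by rw [hθ_def]; field_simp
  have hθ1' : 0 < 1 - θ := by linarith
  calc ∫ x, |f x * g x| ^ 2 ≤ N ^ (2 / p) * (K * (B ^ θ * A ^ (1 - θ))) := hmain
    _ ≤ N ^ (2 / p) * ((K + 1) * ((A + B) ^ θ * A ^ (1 - θ))) := by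
      gcongr <;> linarith
    _ = (N ^ (2 / p) * (K + 1)) * ((A + B) ^ θ * A ^ (1 - θ)) := by ring
    _ ≤ ε * (A + B) + (N ^ (2 / p) * (K + 1) * ε ^ (-θ)) ^ (1 / (1 - θ)) * A :=
      mul_rpow_mul_rpow_le hθ hθ1 hε (by positivity) (by positivity) hA0
    _ = _ := by
      rw [mul_assoc (N ^ (2 / p)), Real.mul_rpow (by positivity) (by positivity),
        ← Real.rpow_mul hN0, ← Real.rpow_mul hN0, hexp,
        show 2 / p * (p / (p - d)) = 1 / p * (2 * p / (p - d)) by ring]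
      ring

end
end

section
/- Let d ≥ 1 be an integer, T > 0, and let b : [0,T] × ℝ^d → ℝ^d be Borel measurable and locally bounded. Suppose there exists a countable set 𝒟 ⊆ C_c^∞(ℝ^d) that separates the points of ℝ^d (for all a ≠ a' in ℝ^d there is φ ∈ 𝒟 with φ(a) ≠ φ(a')), such that for every rational t_f ∈ [0,T], every φ ∈ 𝒟 and every R > 0 there exist sequences b_n ∈ C_c^∞([0,T] × ℝ^d; ℝ^d) and v_n ∈ C¹([0,T]; C_c^∞(ℝ^d)) satisfying ∂_s v_n + b_n·∇v_n = 0 on [0,t_f] × ℝ^d, v_n(t_f,·) = φ, and lim_{n→∞} ∫₀^{t_f} sup_{|x| ≤ R} | (b(s,x) − b_n(s,x))·∇v_n(s,x) | ds = 0. Then for every x ∈ ℝ^d, any two continuous functions y¹, y² : [0,T] → ℝ^d satisfying y^i(t) = x + ∫₀^t b(s, y^i(s)) ds for all t ∈ [0,T] (i = 1,2) coincide: y¹ = y². -/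
open MeasureTheory Metric Set Filter
open scoped ENNReal NNReal Topology

noncomputable section

/-- Test functions `φ ∈ C¹([0,T]; C_c^∞(ℝ^d))`: jointly `C¹` in `(t,x)`,
smooth in `x` for each `t`, with support contained in a fixed ball uniformly in `t`. -/
def IsTestFun (d : ℕ) (φ : ℝ → EuclideanSpace ℝ (Fin d) → ℝ) : Prop :=
  ContDiff ℝ 1 (fun p : ℝ × EuclideanSpace ℝ (Fin d) => φ p.1 p.2) ∧
  (∀ t : ℝ, ContDiff ℝ (⊤ : ℕ∞) (φ t)) ∧
  ∃ R : ℝ, 0 < R ∧ ∀ (t : ℝ) (x : EuclideanSpace ℝ (Fin d)), R ≤ ‖x‖ → φ t x = 0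

/-- Smooth compactly supported scalar function on `ℝ^d`. -/
def IsSmoothCS (d : ℕ) (φ : EuclideanSpace ℝ (Fin d) → ℝ) : Prop :=
  ContDiff ℝ (⊤ : ℕ∞) φ ∧ HasCompactSupport φ

/-- Element of `C_c^∞([0,T] × ℝ^d; ℝ^d)`. -/
def IsSmoothCSVec (d : ℕ) (ψ : ℝ → EuclideanSpace ℝ (Fin d) → EuclideanSpace ℝ (Fin d)) : Prop :=
  ContDiff ℝ (⊤ : ℕ∞) (fun p : ℝ × EuclideanSpace ℝ (Fin d) => ψ p.1 p.2) ∧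
  HasCompactSupport (fun p : ℝ × EuclideanSpace ℝ (Fin d) => ψ p.1 p.2)

/-- A measurable field `b`, evaluated along a continuous path on which it is bounded, is interval
integrable. -/
lemma intervalIntegrable_comp_path {E F : Type*} [NormedAddCommGroup E] [MeasurableSpace E]
    [BorelSpace E] [NormedAddCommGroup F] [MeasurableSpace F] [BorelSpace F]
    [SecondCountableTopology F] {b : ℝ → E → F} (hb : Measurable (Function.uncurry b))
    {y : ℝ → E} {T M : ℝ} (hT : 0 ≤ T) (hy : ContinuousOn y (Icc 0 T))
    (hM : ∀ s ∈ Icc (0 : ℝ) T, ‖b s (y s)‖ ≤ M) :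
    IntervalIntegrable (fun s => b s (y s)) volume 0 T := by
  rw [intervalIntegrable_iff_integrableOn_Icc_of_le hT]
  refine IntegrableOn.of_bound (C := M) (by simp) ?_
    ((ae_restrict_iff' measurableSet_Icc).2 (Eventually.of_forall hM))
  exact (hb.comp_aemeasurable
    (aemeasurable_id.prodMk (hy.aemeasurable measurableSet_Icc))).aestronglyMeasurable

/-- The fundamental theorem of calculus for a `C¹` function along a path with bounded, merely
integrable velocity. -/
lemma sub_eq_integral_along_path {E : Type*} [NormedAddCommGroup E] [NormedSpace ℝ E]
    [ProperSpace E] {u : ℝ → E → ℝ}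
    (hu : ContDiff ℝ 1 (fun p : ℝ × E => u p.1 p.2)) {f y : ℝ → E} {x : E} {t M : ℝ}
    (ht : 0 ≤ t) (hf : IntervalIntegrable f volume 0 t) (hM : ∀ s ∈ Icc (0 : ℝ) t, ‖f s‖ ≤ M)
    (hy : ∀ s ∈ Icc (0 : ℝ) t, y s = x + ∫ r in (0 : ℝ)..s, f r) :
    u t (y t) - u 0 (y 0) =
      ∫ s in (0 : ℝ)..t, (deriv (fun τ => u τ (y s)) s + fderiv ℝ (u s) (y s) (f s)) := by
  have hfi : ∀ s ∈ Icc (0 : ℝ) t, IntervalIntegrable f volume 0 s := fun s hs =>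
    hf.mono_set (by rw [uIcc_of_le hs.1, uIcc_of_le ht]; exact Icc_subset_Icc_right hs.2)
  have hM0 : 0 ≤ M := (norm_nonneg _).trans (hM 0 (left_mem_Icc.2 ht))
  have hylip : LipschitzOnWith M.toNNReal y (Icc 0 t) := by
    refine LipschitzOnWith.of_dist_le_mul fun r hr s hs => ?_
    rw [hy r hr, hy s hs, dist_add_left, dist_eq_norm,
      intervalIntegral.integral_interval_sub_left (hfi r hr) (hfi s hs), Real.coe_toNNReal _ hM0,
      Real.dist_eq]
    refine intervalIntegral.norm_integral_le_of_norm_le_const fun z hz => hM z ?_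
    exact (ordConnected_Icc.uIcc_subset hs hr) (uIoc_subset_uIcc hz)
  have hpath : LipschitzOnWith (max 1 M.toNNReal) (fun s => (s, y s)) (Icc 0 t) :=
    LipschitzWith.id.lipschitzOnWith.prodMk hylip
  obtain ⟨r, hr⟩ := (isCompact_Icc.image_of_continuousOn hylip.continuousOn).isBounded
    |>.subset_closedBall (0 : E)
  obtain ⟨K, hK⟩ := hu.contDiffOn.exists_lipschitzOnWith one_ne_zero
    ((convex_Icc (0 : ℝ) t).prod (convex_closedBall (0 : E) r))
    (isCompact_Icc.prod (isCompact_closedBall (0 : E) r))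
  have hcomp := hK.comp hpath fun s hs => ⟨hs, hr (mem_image_of_mem y hs)⟩
  rw [← uIcc_of_le ht] at hcomp
  have hac := hcomp.absolutelyContinuousOnInterval
  have hFTC := hac.integral_deriv_eq_sub
  simp only [Function.comp_apply] at hFTC
  rw [← hFTC]
  refine intervalIntegral.integral_congr_ae ?_
  filter_upwards [hf.ae_hasDerivAt_integral, Measure.ae_ne volume t] with s hs hst hmem
  rw [uIoc_of_le ht] at hmem
  have hs' : s ∈ Ioo 0 t := ⟨hmem.1, lt_of_le_of_ne hmem.2 hst⟩
  have hyd : HasDerivAt y (f s) s := by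
    refine ((hs (by rw [uIcc_of_le ht]; exact Ioo_subset_Icc_self hs') 0
      left_mem_uIcc).const_add x).congr_of_eventuallyEq ?_
    filter_upwards [Ioo_mem_nhds hs'.1 hs'.2] with z hz using hy z (Ioo_subset_Icc_self hz)
  have hd := (hu.differentiable one_ne_zero (s, y s)).hasFDerivAt
  have h1 := hd.comp_hasDerivAt s ((hasDerivAt_id s).prodMk hyd)
  have h2 := hd.comp_hasDerivAt s ((hasDerivAt_id s).prodMk (hasDerivAt_const s (y s)))
  have h3 := hd.comp (y s) (hasFDerivAt_prodMk_right s (y s))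
  have e2 : deriv (fun τ => u τ (y s)) s = _ := h2.deriv
  have e3 : fderiv ℝ (u s) (y s) = _ := h3.fderiv
  rw [e2, e3]
  refine h1.deriv.trans ?_
  simp [← map_add]

/-- If `u` solves the transport equation with velocity `c`, then its variation along a trajectory
of `b` staying in a ball is controlled by `(b - c) · ∇u` on this ball. -/
lemma enorm_sub_le_of_transport {E : Type*} [NormedAddCommGroup E] [NormedSpace ℝ E]
    [ProperSpace E] {u : ℝ → E → ℝ} (hu : ContDiff ℝ 1 (fun p : ℝ × E => u p.1 p.2))
    {b c : ℝ → E → E} {y : ℝ → E} {x : E} {t M R : ℝ} (ht : 0 ≤ t)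
    (hf : IntervalIntegrable (fun s => b s (y s)) volume 0 t)
    (hM : ∀ s ∈ Icc (0 : ℝ) t, ‖b s (y s)‖ ≤ M)
    (hy : ∀ s ∈ Icc (0 : ℝ) t, y s = x + ∫ r in (0 : ℝ)..s, b r (y r))
    (hR : ∀ s ∈ Icc (0 : ℝ) t, y s ∈ closedBall 0 R)
    (hc : ∀ s ∈ Icc (0 : ℝ) t, ∀ z,
      deriv (fun τ => u τ z) s + fderiv ℝ (u s) z (c s z) = 0) :
    ‖u t (y t) - u 0 x‖ₑ ≤ ∫⁻ s in Icc (0 : ℝ) t, ⨆ z ∈ closedBall (0 : E) R,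
      (‖fderiv ℝ (u s) z (b s z - c s z)‖₊ : ℝ≥0∞) := by
  have h0 : y 0 = x := by simpa using hy 0 (left_mem_Icc.2 ht)
  have h := sub_eq_integral_along_path hu ht hf hM hy
  rw [h0] at h
  rw [h, intervalIntegral.integral_of_le ht, ← integral_Icc_eq_integral_Ioc]
  refine (enorm_integral_le_lintegral_enorm _).trans
    (setLIntegral_mono' measurableSet_Icc fun s hs => ?_)
  refine le_trans (le_of_eq ?_) (le_iSup₂ (y s) (hR s hs))
  rw [map_sub, eq_neg_of_add_eq_zero_left (hc s hs (y s)), neg_add_eq_sub]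
  rfl

theorem path_by_path_uniqueness_of_trajectories
    (d : ℕ) (hd : 1 ≤ d) (T : ℝ) (hT : 0 < T)
    (b : ℝ → EuclideanSpace ℝ (Fin d) → EuclideanSpace ℝ (Fin d))
    (hbmeas : Measurable (Function.uncurry b))
    (hbloc : ∀ K : Set (EuclideanSpace ℝ (Fin d)), IsCompact K →
      ∃ M : ℝ, ∀ s ∈ Icc (0 : ℝ) T, ∀ x ∈ K, ‖b s x‖ ≤ M)
    (𝒟 : Set (EuclideanSpace ℝ (Fin d) → ℝ)) (h𝒟count : 𝒟.Countable)
    (h𝒟smooth : ∀ φ ∈ 𝒟, IsSmoothCS d φ)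
    (h𝒟sep : ∀ a a' : EuclideanSpace ℝ (Fin d), a ≠ a' → ∃ φ ∈ 𝒟, φ a ≠ φ a')
    (happrox : ∀ tf : ℚ, (tf : ℝ) ∈ Icc (0 : ℝ) T → ∀ φ ∈ 𝒟, ∀ R : ℝ, 0 < R →
      ∃ (bn : ℕ → ℝ → EuclideanSpace ℝ (Fin d) → EuclideanSpace ℝ (Fin d))
        (vn : ℕ → ℝ → EuclideanSpace ℝ (Fin d) → ℝ),
        (∀ n, IsSmoothCSVec d (bn n)) ∧
        (∀ n, IsTestFun d (vn n)) ∧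
        (∀ n, ∀ s ∈ Icc (0 : ℝ) (tf : ℝ), ∀ x,
          deriv (fun τ => vn n τ x) s + fderiv ℝ (vn n s) x (bn n s x) = 0) ∧
        (∀ n, ∀ x, vn n (tf : ℝ) x = φ x) ∧
        Tendsto (fun n =>
            ∫⁻ s in Icc (0 : ℝ) (tf : ℝ),
              ⨆ x ∈ closedBall (0 : EuclideanSpace ℝ (Fin d)) R,
                (‖fderiv ℝ (vn n s) x (b s x - bn n s x)‖₊ : ℝ≥0∞))
          atTop (𝓝 0)) :
    ∀ (x : EuclideanSpace ℝ (Fin d)) (y₁ y₂ : ℝ → EuclideanSpace ℝ (Fin d)),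
      ContinuousOn y₁ (Icc 0 T) → ContinuousOn y₂ (Icc 0 T) →
      (∀ t ∈ Icc (0 : ℝ) T, y₁ t = x + ∫ s in (0 : ℝ)..t, b s (y₁ s)) →
      (∀ t ∈ Icc (0 : ℝ) T, y₂ t = x + ∫ s in (0 : ℝ)..t, b s (y₂ s)) →
      EqOn y₁ y₂ (Icc 0 T) := by
  intro x y₁ y₂ hy₁ hy₂ h₁ h₂
  have key : ∀ q : ℚ, (q : ℝ) ∈ Icc 0 T → y₁ q = y₂ q := by
    intro q hq
    obtain ⟨R, hR0, hR⟩ := ((isCompact_Icc.image_of_continuousOn hy₁).union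
      (isCompact_Icc.image_of_continuousOn hy₂)).isBounded.subset_closedBall_lt 0
        (0 : EuclideanSpace ℝ (Fin d))
    obtain ⟨M, hM⟩ := hbloc _ (isCompact_closedBall (0 : EuclideanSpace ℝ (Fin d)) R)
    by_contra hne
    obtain ⟨φ, hφ, hφne⟩ := h𝒟sep _ _ hne
    obtain ⟨bn, vn, -, hvn, heq, hfin, hlim⟩ := happrox q hq φ hφ R hR0
    have tends : ∀ y : ℝ → EuclideanSpace ℝ (Fin d), ContinuousOn y (Icc 0 T) →
        (∀ t ∈ Icc (0 : ℝ) T, y t = x + ∫ s in (0 : ℝ)..t, b s (y s)) →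
        (∀ s ∈ Icc 0 T, y s ∈ closedBall (0 : EuclideanSpace ℝ (Fin d)) R) →
        Tendsto (fun n => vn n 0 x) atTop (𝓝 (φ (y q))) := by
      intro y hyc hy hyR
      have hsub : Icc 0 (q : ℝ) ⊆ Icc 0 T := Icc_subset_Icc_right hq.2
      have hyM : ∀ s ∈ Icc 0 (q : ℝ), ‖b s (y s)‖ ≤ M := fun s hs =>
        hM s (hsub hs) _ (hyR s (hsub hs))
      rw [tendsto_iff_edist_tendsto_0]
      refine tendsto_of_tendsto_of_tendsto_of_le_of_le tendsto_const_nhds hlim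
        (fun _ => zero_le) fun n => ?_
      rw [edist_comm, edist_eq_enorm_sub, ← hfin n]
      exact enorm_sub_le_of_transport (hvn n).1 hq.1
        (intervalIntegrable_comp_path hbmeas hq.1 (hyc.mono hsub) hyM) hyM
        (fun s hs => hy s (hsub hs)) (fun s hs => hyR s (hsub hs)) (heq n)
    exact hφne (tendsto_nhds_unique
      (tends y₁ hy₁ h₁ fun s hs => hR (Or.inl (mem_image_of_mem _ hs)))
      (tends y₂ hy₂ h₂ fun s hs => hR (Or.inr (mem_image_of_mem _ hs))))
  have hdense : Icc 0 T ⊆ closure (Ioo 0 T ∩ range ((↑) : ℚ → ℝ)) := by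
    rw [← closure_Ioo hT.ne]
    exact closure_minimal
      (Dense.open_subset_closure_inter Rat.denseRange_cast isOpen_Ioo) isClosed_closure
  refine EqOn.of_subset_closure (s := Ioo 0 T ∩ range ((↑) : ℚ → ℝ)) ?_ hy₁ hy₂
    (inter_subset_left.trans Ioo_subset_Icc_self) hdense
  rintro _ ⟨hz, q, rfl⟩
  exact key q (Ioo_subset_Icc_self hz)

end
end

section
/- Let d ≥ 1 be an integer, T > 0, m ≥ 1, and let f : [0,T] × ℝ^d → ℝ^d be Borel measurable. Say that a family μ = (μ_t)_{t∈[0,T]} of finite positive Borel measures on ℝ^d is a solution of the continuity equation in the class 𝓛_f if: each μ_t is absolutely continuous with respect to Lebesgue measure with density u(t,·); the function u belongs to L¹([0,T] × ℝ^d) ∩ L^m([0,T] × ℝ^d); ∫₀^T ∫_{ℝ^d} |f(t,x)| (1+|x|)^{−1} dμ_t(x) dt < ∞; and for every φ ∈ C_c^∞(ℝ^d), the map t ↦ ∫ φ dμ_t is continuous and satisfies ∫ φ dμ_t = ∫ φ dμ₀ + ∫₀^t ∫_{ℝ^d} f(s,x)·∇φ(x) dμ_s(x) ds for all t ∈ [0,T].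 Say that a measurable map Φ : [0,T] × ℝ^d → ℝ^d is an 𝓛_f Lagrangian flow from a Borel set S ⊆ ℝ^d if: for Lebesgue-a.e. x ∈ S, the map t ↦ Φ_t(x) is continuous, s ↦ f(s, Φ_s(x)) is integrable on [0,T], and Φ_t(x) = x + ∫₀^t f(s, Φ_s(x)) ds for all t ∈ [0,T]; and the family (Φ_t)_#(1_S · 𝓛^d), t ∈ [0,T], is a solution of the continuity equation in the class 𝓛_f. Theorem: suppose that for every Borel set S ⊆ ℝ^d with 0 < 𝓛^d(S) < ∞, any two solutions of the continuity equation in the class 𝓛_f with the same initial datum μ₀ = 1_S · 𝓛^d coincide (μ¹_t = μ²_t for all t). Then for every Borel set S with 0 < 𝓛^d(S) < ∞, any two 𝓛_f Lagrangian flows Φ¹, Φ² from S satisfy: for every t ∈ [0,T], Φ¹_t(x) = Φ²_t(x) for Lebesgue-a.e. x ∈ S. -/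
open MeasureTheory Metric Set
open scoped ENNReal NNReal

noncomputable section

/-- `μ = (μ_t)` is a solution of the continuity equation `∂_t μ + div(f μ) = 0`
in the class `𝓛_f`: each `μ_t` (for `t ∈ [0,T]`) is a finite positive measure,
absolutely continuous with density `u(t,·)`, with `u ∈ L¹ ∩ L^m([0,T] × ℝ^d)`,
the drift satisfies `∫₀^T ∫ |f| (1+|x|)⁻¹ dμ_t dt < ∞`, and the weak
formulation holds with weak continuity in time. -/
def IsCESolInClass (d : ℕ) (T m : ℝ)
    (f : ℝ → EuclideanSpace ℝ (Fin d) → EuclideanSpace ℝ (Fin d))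
    (μ : ℝ → Measure (EuclideanSpace ℝ (Fin d))) : Prop :=
  (∀ t ∈ Icc (0 : ℝ) T, μ t univ < ⊤) ∧
  (∃ u : ℝ → EuclideanSpace ℝ (Fin d) → ℝ≥0∞,
    Measurable (Function.uncurry u) ∧
    (∀ t ∈ Icc (0 : ℝ) T,
      μ t = (volume : Measure (EuclideanSpace ℝ (Fin d))).withDensity (u t)) ∧
    (∫⁻ t in Icc (0 : ℝ) T, ∫⁻ x, u t x) < ⊤ ∧
    (∫⁻ t in Icc (0 : ℝ) T, ∫⁻ x, u t x ^ m) < ⊤) ∧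
  (∫⁻ t in Icc (0 : ℝ) T,
      ∫⁻ x, (‖f t x‖₊ : ℝ≥0∞) * ENNReal.ofReal ((1 + ‖x‖)⁻¹) ∂(μ t)) < ⊤ ∧
  (∀ φ : EuclideanSpace ℝ (Fin d) → ℝ, IsSmoothCS d φ →
    ContinuousOn (fun t => ∫ x, φ x ∂(μ t)) (Icc 0 T) ∧
    ∀ t ∈ Icc (0 : ℝ) T,
      (∫ x, φ x ∂(μ t)) = (∫ x, φ x ∂(μ 0)) +
        ∫ s in (0 : ℝ)..t, ∫ x, fderiv ℝ φ x (f s x) ∂(μ s))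

/-- `Φ` is an `𝓛_f` (local) Lagrangian flow starting from the Borel set `S`
and solving the ODE `Φ' = f(t,Φ)`. -/
def IsLagrangianFlow (d : ℕ) (T m : ℝ)
    (f : ℝ → EuclideanSpace ℝ (Fin d) → EuclideanSpace ℝ (Fin d))
    (S : Set (EuclideanSpace ℝ (Fin d)))
    (Φ : ℝ → EuclideanSpace ℝ (Fin d) → EuclideanSpace ℝ (Fin d)) : Prop :=
  Measurable (Function.uncurry Φ) ∧
  (∀ᵐ x ∂((volume : Measure (EuclideanSpace ℝ (Fin d))).restrict S),
    ContinuousOn (fun t => Φ t x) (Icc 0 T) ∧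
    IntegrableOn (fun s => f s (Φ s x)) (Icc 0 T) ∧
    ∀ t ∈ Icc (0 : ℝ) T, Φ t x = x + ∫ s in (0 : ℝ)..t, f s (Φ s x)) ∧
  IsCESolInClass d T m f
    (fun t => Measure.map (Φ t)
      ((volume : Measure (EuclideanSpace ℝ (Fin d))).restrict S))

/-- A function whose increments are dominated by those of an absolutely continuous function is
absolutely continuous. -/
theorem AbsolutelyContinuousOnInterval.of_dist_le {X Y : Type*} [PseudoMetricSpace X]
    [PseudoMetricSpace Y] {g : ℝ → X} {h : ℝ → Y} {a b K : ℝ}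
    (hh : AbsolutelyContinuousOnInterval h a b)
    (hgh : ∀ x ∈ uIcc a b, ∀ y ∈ uIcc a b, dist (g x) (g y) ≤ K * dist (h x) (h y)) :
    AbsolutelyContinuousOnInterval g a b := by
  have hlim := Filter.Tendsto.const_mul K hh
  rw [mul_zero] at hlim
  refine squeeze_zero' (Filter.Eventually.of_forall fun E => Finset.sum_nonneg fun _ _ =>
    dist_nonneg) ?_ hlim
  filter_upwards [Filter.mem_inf_of_right (Filter.mem_principal_self _)] with E hE
  rw [Finset.mul_sum]
  exact Finset.sum_le_sum fun i hi => hgh _ (hE.1 i hi).1 _ (hE.1 i hi).2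

/-- Chain rule in integral form along the primitive of an integrable curve. -/
theorem integral_fderiv_comp_primitive {E : Type*} [NormedAddCommGroup E] [NormedSpace ℝ E]
    [CompleteSpace E] {φ : E → ℝ} (hφ : Differentiable ℝ φ) {K : ℝ≥0} (hK : LipschitzWith K φ)
    {h : ℝ → E} {a b : ℝ} (hh : IntervalIntegrable h volume a b) (x : E) :
    ∫ s in a..b, fderiv ℝ φ (x + ∫ r in a..s, h r) (h s) =
      φ (x + ∫ r in a..b, h r) - φ x := by
  have hac : AbsolutelyContinuousOnInterval (fun t => φ (x + ∫ r in a..t, h r)) a b := by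
    refine (hh.norm.absolutelyContinuousOnInterval_intervalIntegral
      left_mem_uIcc).of_dist_le (K := K) fun s hs t ht => ?_
    refine (hK.dist_le_mul _ _).trans ?_
    have hsub : ∀ r ∈ uIcc a b, IntervalIntegrable h volume a r := fun r hr =>
      hh.mono_set (uIcc_subset_uIcc_left hr)
    gcongr
    rw [dist_add_left, dist_eq_norm, Real.dist_eq,
      intervalIntegral.integral_interval_sub_left (hsub s hs) (hsub t ht),
      intervalIntegral.integral_interval_sub_left (hsub s hs).norm (hsub t ht).norm]
    exact intervalIntegral.norm_integral_le_abs_integral_norm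
  have hftc := hac.integral_deriv_eq_sub
  simp only [intervalIntegral.integral_same, add_zero] at hftc
  rw [← hftc]
  refine intervalIntegral.integral_congr_ae ?_
  filter_upwards [hh.ae_hasDerivAt_integral] with s hs hmem
  have hder := (hs (uIoc_subset_uIcc hmem) a left_mem_uIcc).const_add x
  exact ((hφ _).hasFDerivAt.comp_hasDerivAt s hder).deriv.symm

open ProbabilityTheory in
/-- If a finite kernel `κ` is dominated by `η` and `u` is jointly measurable, there is a jointly
measurable `v ≤ u` that is a density of `κ a` wherever `u a` is a density of `η a`. -/
theorem ProbabilityTheory.Kernel.exists_measurable_density_le {α γ : Type*} [MeasurableSpace α]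
    [MeasurableSpace γ] [MeasurableSpace.CountablyGenerated γ] (κ η : Kernel α γ)
    [IsFiniteKernel κ] [IsFiniteKernel η] (hκη : κ ≤ η) (ν : Measure γ) {u : α → γ → ℝ≥0∞}
    (hu : Measurable (Function.uncurry u)) :
    ∃ v : α → γ → ℝ≥0∞, Measurable (Function.uncurry v) ∧ (∀ a x, v a x ≤ u a x) ∧
      ∀ a, η a = ν.withDensity (u a) → κ a = ν.withDensity (v a) := by
  have hr := Kernel.measurable_rnDeriv κ η
  refine ⟨fun a x => u a x * min (κ.rnDeriv η a x) 1, hu.mul (hr.min measurable_const),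
    fun a x => mul_le_of_le_one_right' (min_le_right _ _), fun a ha => ?_⟩
  have hra : Measurable (fun x => min (κ.rnDeriv η a x) 1) :=
    (Kernel.measurable_rnDeriv_right κ η a).min measurable_const
  have hua : Measurable (u a) := hu.of_uncurry_left
  calc κ a = η.withDensity (κ.rnDeriv η) a :=
        (Kernel.withDensity_rnDeriv_eq (hκη a).absolutelyContinuous).symm
    _ = (η a).withDensity (κ.rnDeriv η a) := Kernel.withDensity_apply η hr a
    _ = (η a).withDensity (fun x => min (κ.rnDeriv η a x) 1) := by
        refine MeasureTheory.withDensity_congr_ae ?_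
        filter_upwards [Kernel.rnDeriv_eq_rnDeriv_measure (κ := κ) (η := η) (a := a),
          Measure.rnDeriv_le_one_of_le (hκη a)] with x hx hx1
        rw [hx]
        exact (min_eq_left hx1).symm
    _ = ν.withDensity (fun x => u a x * min (κ.rnDeriv η a x) 1) := by
        rw [ha, ← MeasureTheory.withDensity_mul _ hua hra]
        rfl

open ProbabilityTheory in
/-- The kernel `t ↦ (Φ_t)_# ρ`. -/
def pushforwardKernel {α β γ : Type*} [MeasurableSpace α] [MeasurableSpace β] [MeasurableSpace γ]
    (Φ : α → β → γ) (ρ : Measure β) : Kernel α γ :=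
  (Kernel.id ×ₖ Kernel.const α ρ).map (Function.uncurry Φ)

instance {α β γ : Type*} [MeasurableSpace α] [MeasurableSpace β] [MeasurableSpace γ]
    (Φ : α → β → γ) (ρ : Measure β) [IsFiniteMeasure ρ] :
    ProbabilityTheory.IsFiniteKernel (pushforwardKernel Φ ρ) := by
  unfold pushforwardKernel
  infer_instance

open ProbabilityTheory in
theorem pushforwardKernel_apply {α β γ : Type*} [MeasurableSpace α] [MeasurableSpace β]
    [MeasurableSpace γ] {Φ : α → β → γ} (hΦ : Measurable (Function.uncurry Φ)) (ρ : Measure β)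
    [SFinite ρ] (t : α) : pushforwardKernel Φ ρ t = ρ.map (Φ t) := by
  rw [pushforwardKernel, Kernel.map_apply _ hΦ, Kernel.prod_apply, Kernel.id_apply,
    Kernel.const_apply, Measure.dirac_prod, Measure.map_map hΦ measurable_prodMk_left]
  rfl

/-- The gradient of a compactly supported smooth function decays faster than `(1 + |x|)⁻¹`. -/
theorem IsSmoothCS.exists_enorm_fderiv_apply_le {d : ℕ} {φ : EuclideanSpace ℝ (Fin d) → ℝ}
    (hφ : IsSmoothCS d φ) : ∃ C : ℝ≥0, ∀ x v : EuclideanSpace ℝ (Fin d),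
      ‖fderiv ℝ φ x v‖ₑ ≤ C * ((‖v‖₊ : ℝ≥0∞) * ENNReal.ofReal ((1 + ‖x‖)⁻¹)) := by
  have hcont : Continuous fun x => (1 + ‖x‖) • fderiv ℝ φ x :=
    (continuous_const.add continuous_norm).smul (hφ.1.continuous_fderiv (by simp))
  obtain ⟨C, hC⟩ := ((hφ.2.fderiv ℝ).smul_left (f := fun x => 1 + ‖x‖)).exists_bound_of_continuous
    hcont
  refine ⟨C.toNNReal, fun x v => ?_⟩
  have hx : 0 < 1 + ‖x‖ := by positivity
  have hCx := hC x
  rw [Pi.smul_apply', norm_smul, Real.norm_of_nonneg hx.le] at hCx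
  have hC0 : 0 ≤ C := le_trans (by positivity) hCx
  have hreal : ‖fderiv ℝ φ x v‖ ≤ C * (‖v‖ * (1 + ‖x‖)⁻¹) := by
    refine ((fderiv ℝ φ x).le_opNorm v).trans ?_
    rw [← div_eq_mul_inv, mul_div_assoc', le_div_iff₀ hx]
    nlinarith [mul_le_mul_of_nonneg_right hCx (norm_nonneg v)]
  rw [← ofReal_norm, show (C.toNNReal : ℝ≥0∞) = ENNReal.ofReal C from rfl,
    ← enorm_eq_nnnorm, ← ofReal_norm, ← ENNReal.ofReal_mul (norm_nonneg v),
    ← ENNReal.ofReal_mul hC0]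
  exact ENNReal.ofReal_le_ofReal hreal

section Flow

variable {d : ℕ} {T m : ℝ} {f : ℝ → EuclideanSpace ℝ (Fin d) → EuclideanSpace ℝ (Fin d)}
  {S : Set (EuclideanSpace ℝ (Fin d))}
  {Φ : ℝ → EuclideanSpace ℝ (Fin d) → EuclideanSpace ℝ (Fin d)}

/-- Along almost every trajectory of a Lagrangian flow, test functions satisfy the chain rule. -/
theorem IsLagrangianFlow.ae_comp_eq_add_integral (hΦ : IsLagrangianFlow d T m f S Φ)
    {φ : EuclideanSpace ℝ (Fin d) → ℝ} (hφ : IsSmoothCS d φ) :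
    ∀ᵐ x ∂((volume : Measure (EuclideanSpace ℝ (Fin d))).restrict S), ∀ t ∈ Icc (0 : ℝ) T,
      φ (Φ t x) = φ x + ∫ s in (0 : ℝ)..t, fderiv ℝ φ (Φ s x) (f s (Φ s x)) := by
  obtain ⟨K, hK⟩ := hφ.1.lipschitzWith_of_hasCompactSupport hφ.2 (by simp)
  filter_upwards [hΦ.2.1] with x hx t ht
  obtain ⟨-, hint, heq⟩ := hx
  have hsub : uIcc 0 t ⊆ Icc 0 T := by
    rw [uIcc_of_le ht.1]
    exact Icc_subset_Icc_right ht.2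
  have hchain := integral_fderiv_comp_primitive (hφ.1.differentiable (by simp)) hK
    (hint.mono_set hsub).intervalIntegrable x
  rw [← heq t ht] at hchain
  rw [eq_comm, ← eq_sub_iff_add_eq', ← hchain]
  refine intervalIntegral.integral_congr fun s hs => ?_
  simp only [← heq s (hsub hs)]

/-- The derivative of a test function along a Lagrangian flow is jointly integrable. -/
theorem IsLagrangianFlow.integrable_fderiv_comp (hΦ : IsLagrangianFlow d T m f S Φ)
    (hf : Measurable (Function.uncurry f)) {φ : EuclideanSpace ℝ (Fin d) → ℝ}
    (hφ : IsSmoothCS d φ) (hS : volume S < ⊤) :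
    Integrable (Function.uncurry fun s x => fderiv ℝ φ (Φ s x) (f s (Φ s x)))
      (((volume : Measure ℝ).restrict (Icc 0 T)).prod (volume.restrict S)) := by
  have : IsFiniteMeasure ((volume : Measure (EuclideanSpace ℝ (Fin d))).restrict S) :=
    isFiniteMeasure_restrict.2 hS.ne
  obtain ⟨C, hC⟩ := hφ.exists_enorm_fderiv_apply_le
  have hfΦ : Measurable fun p : ℝ × EuclideanSpace ℝ (Fin d) => f p.1 (Φ p.1 p.2) :=
    hf.comp (measurable_fst.prodMk hΦ.1)
  have hmeas : Measurable
      (Function.uncurry fun s x => fderiv ℝ φ (Φ s x) (f s (Φ s x))) := by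
    have hcont : Continuous fun q : EuclideanSpace ℝ (Fin d) × EuclideanSpace ℝ (Fin d) =>
        fderiv ℝ φ q.1 q.2 :=
      ((hφ.1.continuous_fderiv (by simp)).comp continuous_fst).clm_apply continuous_snd
    exact hcont.measurable.comp (hΦ.1.prodMk hfΦ)
  refine ⟨hmeas.aestronglyMeasurable, ?_⟩
  rw [hasFiniteIntegral_iff_enorm, lintegral_prod _ hmeas.enorm.aemeasurable]
  refine lt_of_le_of_lt ?_ (ENNReal.mul_lt_top (ENNReal.coe_lt_top (r := C)) hΦ.2.2.2.2.1)
  rw [← lintegral_const_mul' _ _ ENNReal.coe_ne_top]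
  refine lintegral_mono fun s => ?_
  have hfs : Measurable (f s) := hf.of_uncurry_left
  rw [lintegral_map (by fun_prop) hΦ.1.of_uncurry_left,
    ← lintegral_const_mul' _ _ ENNReal.coe_ne_top]
  exact lintegral_mono fun x => hC _ _

/-- A Lagrangian flow from `S` transports every measure dominated by `1_S 𝓛^d` along a solution of
the continuity equation in the class `𝓛_f`. -/
theorem IsLagrangianFlow.isCESolInClass_map (hΦ : IsLagrangianFlow d T m f S Φ) (hm : 0 ≤ m)
    (hf : Measurable (Function.uncurry f)) (hS : volume S < ⊤)
    {ρ : Measure (EuclideanSpace ℝ (Fin d))} (hρ : ρ ≤ volume.restrict S) :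
    IsCESolInClass d T m f fun t => ρ.map (Φ t) := by
  have hfinS : IsFiniteMeasure ((volume : Measure (EuclideanSpace ℝ (Fin d))).restrict S) :=
    isFiniteMeasure_restrict.2 hS.ne
  have hfin : IsFiniteMeasure ρ := isFiniteMeasure_of_le _ hρ
  have hΦt : ∀ t, Measurable (Φ t) := fun t => hΦ.1.of_uncurry_left
  have hle : ∀ t, ρ.map (Φ t) ≤ (volume.restrict S).map (Φ t) := fun t =>
    Measure.map_mono hρ (hΦt t)
  obtain ⟨-, ⟨u, hu, hdens, hL1, hLm⟩, hdrift, -⟩ := hΦ.2.2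
  refine ⟨fun t _ => measure_lt_top _ _, ?_, ?_, fun φ hφ => ⟨?_, fun t ht => ?_⟩⟩
  · obtain ⟨v, hv, hvu, hvdens⟩ := ProbabilityTheory.Kernel.exists_measurable_density_le
      (pushforwardKernel Φ ρ) (pushforwardKernel Φ (volume.restrict S))
      (fun t => by simpa only [pushforwardKernel_apply hΦ.1] using hle t) volume hu
    simp only [pushforwardKernel_apply hΦ.1] at hvdens
    exact ⟨v, hv, fun t ht => hvdens t (hdens t ht),
      (lintegral_mono fun t => lintegral_mono fun x => hvu t x).trans_lt hL1,
      (lintegral_mono fun t => lintegral_mono fun x =>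
        ENNReal.rpow_le_rpow (hvu t x) hm).trans_lt hLm⟩
  · exact (lintegral_mono fun t => lintegral_mono' (hle t) le_rfl).trans_lt hdrift
  · have hφc : Continuous φ := hφ.1.continuous
    obtain ⟨C, hC⟩ := hφ.2.exists_bound_of_continuous hφc
    simp only [integral_map (hΦt _).aemeasurable hφc.aestronglyMeasurable]
    refine continuousOn_of_dominated (bound := fun _ => C)
      (fun t _ => (hφc.measurable.comp (hΦt t)).aestronglyMeasurable)
      (fun t _ => Filter.Eventually.of_forall fun x => hC _) (integrable_const C) ?_
    filter_upwards [ae_mono hρ hΦ.2.1] with x hx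
    exact hφc.comp_continuousOn hx.1
  · have hφc : Continuous φ := hφ.1.continuous
    obtain ⟨C, hC⟩ := hφ.2.exists_bound_of_continuous hφc
    have hchain := ae_mono hρ (hΦ.ae_comp_eq_add_integral hφ)
    have hdf : ∀ s, Measurable fun x => fderiv ℝ φ x (f s x) := fun s =>
      (((hφ.1.continuous_fderiv (by simp)).comp continuous_fst).clm_apply
        continuous_snd).measurable.comp (measurable_id.prodMk hf.of_uncurry_left)
    have hF := (hΦ.integrable_fderiv_comp hf hφ hS).mono_measure
      (Measure.prod_mono (Measure.restrict_mono_set volume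
        (Ioc_subset_Icc_self.trans (Icc_subset_Icc_right ht.2) : Ioc 0 t ⊆ Icc 0 T)) hρ)
    simp only [integral_map (hΦt _).aemeasurable hφc.aestronglyMeasurable,
      integral_map (hΦt _).aemeasurable (hdf _).aestronglyMeasurable]
    rw [intervalIntegral.integral_of_le ht.1, integral_integral_swap hF]
    have hφ0 : ∫ x, φ (Φ 0 x) ∂ρ = ∫ x, φ x ∂ρ := by
      refine integral_congr_ae ?_
      filter_upwards [hchain] with x hx
      simpa using hx 0 ⟨le_rfl, ht.1.trans ht.2⟩
    rw [hφ0]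
    refine Eq.trans (integral_congr_ae ?_) (integral_add (Integrable.of_bound
      hφc.aestronglyMeasurable C (Filter.Eventually.of_forall hC)) hF.integral_prod_right)
    filter_upwards [hchain] with x hx
    rw [hx t ht, intervalIntegral.integral_of_le ht.1]

theorem IsLagrangianFlow.map_zero (hΦ : IsLagrangianFlow d T m f S Φ) (hT : 0 ≤ T)
    {ρ : Measure (EuclideanSpace ℝ (Fin d))} (hρ : ρ ≤ volume.restrict S) :
    ρ.map (Φ 0) = ρ := by
  have hid : Φ 0 =ᵐ[ρ] id := by
    filter_upwards [ae_mono hρ hΦ.2.1] with x hx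
    simpa using hx.2.2 0 ⟨le_rfl, hT⟩
  rw [Measure.map_congr hid, Measure.map_id]

end Flow

/-- Two measurable maps that push forward every restriction of a finite measure to the same measure
agree almost everywhere. -/
theorem ae_eq_of_forall_map_restrict_eq {α β : Type*} [MeasurableSpace α] [MeasurableSpace β]
    [MeasurableSpace.CountablySeparated β] {ρ : Measure α} [IsFiniteMeasure ρ] {g h : α → β}
    (hg : Measurable g) (hh : Measurable h)
    (H : ∀ A, MeasurableSet A → (ρ.restrict A).map g = (ρ.restrict A).map h) : g =ᵐ[ρ] h := by
  have hzero : ∀ {g h : α → β}, Measurable g → Measurable h →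
      (∀ A, MeasurableSet A → (ρ.restrict A).map g = (ρ.restrict A).map h) →
      ∀ B, MeasurableSet B → ∀ᵐ x ∂ρ, g x ∈ B → h x ∈ B := by
    intro g h hg hh H B hB
    have hA := congrArg (· B) (H _ ((hg hB).diff (hh hB)))
    simp only [Measure.map_apply hg hB, Measure.map_apply hh hB,
      Measure.restrict_apply (hg hB), Measure.restrict_apply (hh hB)] at hA
    rw [inter_sdiff_self, measure_empty, inter_eq_right.2 sdiff_subset] at hA
    rw [ae_iff]
    convert hA using 2
    ext x
    simp
  refine Filter.EventuallyEq.of_forall_separating_mem_iff MeasurableSet fun B hB => ?_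
  filter_upwards [hzero hg hh H B hB, hzero hh hg (fun A hA => (H A hA).symm) B hB] with x h1 h2
  exact ⟨h1, h2⟩

theorem uniqueness_of_Lagrangian_flows_from_CE_uniqueness
    (d : ℕ) (hd : 1 ≤ d) (T m : ℝ) (hT : 0 < T) (hm : 1 ≤ m)
    (f : ℝ → EuclideanSpace ℝ (Fin d) → EuclideanSpace ℝ (Fin d))
    (hf : Measurable (Function.uncurry f))
    (hCEuniq : ∀ S : Set (EuclideanSpace ℝ (Fin d)), MeasurableSet S →
      0 < volume S → volume S < ⊤ →
      ∀ μ₁ μ₂ : ℝ → Measure (EuclideanSpace ℝ (Fin d)),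
        IsCESolInClass d T m f μ₁ → IsCESolInClass d T m f μ₂ →
        μ₁ 0 = (volume : Measure (EuclideanSpace ℝ (Fin d))).restrict S →
        μ₂ 0 = (volume : Measure (EuclideanSpace ℝ (Fin d))).restrict S →
        ∀ t ∈ Icc (0 : ℝ) T, μ₁ t = μ₂ t) :
    ∀ S : Set (EuclideanSpace ℝ (Fin d)), MeasurableSet S →
      0 < volume S → volume S < ⊤ →
      ∀ Φ₁ Φ₂ : ℝ → EuclideanSpace ℝ (Fin d) → EuclideanSpace ℝ (Fin d),
        IsLagrangianFlow d T m f S Φ₁ → IsLagrangianFlow d T m f S Φ₂ →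
        ∀ t ∈ Icc (0 : ℝ) T,
          ∀ᵐ x ∂((volume : Measure (EuclideanSpace ℝ (Fin d))).restrict S),
            Φ₁ t x = Φ₂ t x := by
  intro S hS _ hSfin Φ₁ Φ₂ h₁ h₂ t ht
  have : IsFiniteMeasure ((volume : Measure (EuclideanSpace ℝ (Fin d))).restrict S) :=
    isFiniteMeasure_restrict.2 hSfin.ne
  refine ae_eq_of_forall_map_restrict_eq h₁.1.of_uncurry_left h₂.1.of_uncurry_left fun A hA => ?_
  rw [Measure.restrict_restrict hA]
  rcases eq_or_ne (volume (A ∩ S)) 0 with h0 | h0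
  · simp [Measure.restrict_eq_zero.2 h0]
  have hle : (volume : Measure (EuclideanSpace ℝ (Fin d))).restrict (A ∩ S) ≤
      volume.restrict S := Measure.restrict_mono_set _ inter_subset_right
  have hm0 : 0 ≤ m := zero_le_one.trans hm
  exact hCEuniq (A ∩ S) (hA.inter hS) (pos_iff_ne_zero.2 h0)
    ((measure_mono inter_subset_right).trans_lt hSfin) _ _
    (h₁.isCESolInClass_map hm0 hf hSfin hle) (h₂.isCESolInClass_map hm0 hf hSfin hle)
    (h₁.map_zero hT.le hle) (h₂.map_zero hT.le hle) t ht

end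
end

section
/- Let d ≥ 1 be an integer, α ∈ (−1,1), and define b : ℝ^d → ℝ^d by b(x) = −|x|^{α−1} x for 0 < |x| ≤ 1, b(x) = −x for |x| > 1, and b(0) = 0. Then for every x₀ ∈ ℝ^d: (existence) there exists a continuous function y : [0,∞) → ℝ^d such that s ↦ b(y(s)) is locally Lebesgue integrable and y(t) = x₀ + ∫₀^t b(y(s)) ds for all t ≥ 0; (uniqueness) any two such functions coincide; (coalescence) every such function satisfies y(t) = 0 for all t ≥ max(log|x₀|, 0) + 1/(1−α). -/
open MeasureTheory Set
open scoped ENNReal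

noncomputable section

/-- The inward-pointing drift `b(x) = -|x|^{α-1} x` for `0 < |x| ≤ 1`,
`b(x) = -x` for `|x| > 1`, and `b(0) = 0` (note `‖x‖ ^ (α-1) = 0` at `x = 0`
for the real power with negative exponent). -/
def bIn (d : ℕ) (α : ℝ) (x : EuclideanSpace ℝ (Fin d)) : EuclideanSpace ℝ (Fin d) :=
  if ‖x‖ ≤ 1 then -((‖x‖ ^ (α - 1)) • x) else -x

/-- `y` is a solution on `[0,∞)` of the ODE `y' = bIn d α (y)`, `y 0 = x₀`,
in the integral sense, with locally integrable right-hand side. -/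
def IsSolIn (d : ℕ) (α : ℝ) (x₀ : EuclideanSpace ℝ (Fin d))
    (y : ℝ → EuclideanSpace ℝ (Fin d)) : Prop :=
  ContinuousOn y (Ici 0) ∧
  (∀ t : ℝ, 0 ≤ t → IntegrableOn (fun s => bIn d α (y s)) (Icc 0 t)) ∧
  (∀ t : ℝ, 0 ≤ t → y t = x₀ + ∫ s in (0 : ℝ)..t, bIn d α (y s))

open scoped Topology

/-- Two differentiable pieces glued at a point where values and derivatives agree. -/
lemma hasDerivAt_ite_le {f g : ℝ → ℝ} {c D x : ℝ} (hf : x ≤ c → HasDerivAt f D x)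
    (hg : c ≤ x → HasDerivAt g D x) (hfg : f c = g c) :
    HasDerivAt (fun t => if t ≤ c then f t else g t) D x := by
  rcases lt_trichotomy x c with h | rfl | h
  · refine (hf h.le).congr_of_eventuallyEq ?_
    filter_upwards [Iio_mem_nhds h] with t ht
    exact if_pos (le_of_lt ht)
  · have h₁ : HasDerivWithinAt (fun t => if t ≤ x then f t else g t) D (Iic x) x :=
      (hf le_rfl).hasDerivWithinAt.congr (fun t ht => if_pos ht) (if_pos le_rfl)
    have h₂ : HasDerivWithinAt (fun t => if t ≤ x then f t else g t) D (Ici x) x := by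
      refine (hg le_rfl).hasDerivWithinAt.congr (fun t ht => ?_) (by simp [hfg])
      rcases eq_or_lt_of_le (show x ≤ t from ht) with rfl | h
      · simp [hfg]
      · exact if_neg h.not_ge
    simpa using h₁.union h₂
  · refine (hg h.le).congr_of_eventuallyEq ?_
    filter_upwards [Ioi_mem_nhds h] with t ht
    exact if_neg (not_le_of_gt ht)

/-- A continuous function on `[a, b]` with zero derivative inside has equal end values. -/
lemma eq_endpoints_of_hasDerivAt_zero {E : Type*} [NormedAddCommGroup E] [NormedSpace ℝ E]
    [CompleteSpace E] {f : ℝ → E} {a b : ℝ} (hab : a ≤ b) (hc : ContinuousOn f (Icc a b))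
    (hd : ∀ x ∈ Ioo a b, HasDerivAt f 0 x) : f b = f a := by
  have h := intervalIntegral.integral_eq_sub_of_hasDerivAt_of_le hab hc hd (by simp)
  simpa [eq_comm, sub_eq_zero] using h

/-- The modulus `|b(x)|` as a function of `|x| > 0`. -/
def inwardSpeed (α r : ℝ) : ℝ := max (r ^ α) r

/-- The time needed to travel from distance `r` to the origin. -/
def hittingTime (α r : ℝ) : ℝ :=
  if r ≤ 1 then r ^ (1 - α) * (1 - α)⁻¹ else (1 - α)⁻¹ + Real.log r

/-- The distance to the origin when the remaining time is `τ`. -/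
def radialProfile (α τ : ℝ) : ℝ :=
  if τ ≤ (1 - α)⁻¹ then ((1 - α) * max τ 0) ^ (1 - α)⁻¹ else Real.exp (τ - (1 - α)⁻¹)

section Scalar

variable {α : ℝ}

lemma inwardSpeed_of_le_one (hα : α < 1) {r : ℝ} (h0 : 0 < r) (h1 : r ≤ 1) :
    inwardSpeed α r = r ^ α := by
  refine max_eq_left ?_
  simpa using Real.rpow_le_rpow_of_exponent_ge h0 h1 hα.le

lemma inwardSpeed_of_one_le (hα : α < 1) {r : ℝ} (h1 : 1 ≤ r) : inwardSpeed α r = r := by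
  refine max_eq_right ?_
  simpa using Real.rpow_le_rpow_of_exponent_le h1 hα.le

lemma inwardSpeed_pos {r : ℝ} (h0 : 0 < r) : 0 < inwardSpeed α r :=
  lt_max_of_lt_right h0

lemma continuousAt_inwardSpeed {r : ℝ} (h0 : 0 < r) : ContinuousAt (inwardSpeed α) r :=
  (Real.continuousAt_rpow_const r α (Or.inl h0.ne')).max continuousAt_id

lemma hittingTime_zero (hα : α < 1) : hittingTime α 0 = 0 := by
  have : 1 - α ≠ 0 := by linarith
  simp [hittingTime, Real.zero_rpow this]

lemma hittingTime_nonneg (hα : α < 1) {r : ℝ} (h0 : 0 ≤ r) : 0 ≤ hittingTime α r := by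
  have : 0 < 1 - α := by linarith
  unfold hittingTime
  split_ifs with h
  · positivity
  · have := Real.log_nonneg (not_le.1 h).le
    positivity

lemma hittingTime_le (hα : α < 1) {r : ℝ} (h0 : 0 ≤ r) :
    hittingTime α r ≤ max (Real.log r) 0 + 1 / (1 - α) := by
  have hpos : 0 < 1 - α := by linarith
  rw [one_div]
  unfold hittingTime
  split_ifs with h
  · have h₁ : r ^ (1 - α) * (1 - α)⁻¹ ≤ 1 * (1 - α)⁻¹ := by
      gcongr
      exact Real.rpow_le_one h0 h hpos.le
    linarith [le_max_right (Real.log r) 0]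
  · linarith [le_max_left (Real.log r) 0]

lemma hasDerivAt_hittingTime (hα : α < 1) {r : ℝ} (h0 : 0 < r) :
    HasDerivAt (hittingTime α) (inwardSpeed α r)⁻¹ r := by
  have hpos : 0 < 1 - α := by linarith
  refine hasDerivAt_ite_le (fun h => ?_) (fun h => ?_) (by simp)
  · rw [inwardSpeed_of_le_one hα h0 h, ← Real.rpow_neg h0.le]
    refine ((Real.hasDerivAt_rpow_const (p := 1 - α) (Or.inl h0.ne')).mul_const
      (1 - α)⁻¹).congr_deriv ?_
    rw [show 1 - α - 1 = -α by ring]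
    field_simp
  · rw [inwardSpeed_of_one_le hα h]
    exact (Real.hasDerivAt_log h0.ne').const_add _

lemma continuousOn_hittingTime (hα : α < 1) : ContinuousOn (hittingTime α) (Ici 0) := by
  intro r hr
  rcases eq_or_lt_of_le (show 0 ≤ r from hr) with rfl | h
  · have hc : ContinuousAt (fun r : ℝ => r ^ (1 - α) * (1 - α)⁻¹) 0 :=
      (Real.continuousAt_rpow_const 0 (1 - α) (Or.inr (by linarith))).mul continuousAt_const
    refine (hc.congr ?_).continuousWithinAt
    filter_upwards [Iio_mem_nhds (zero_lt_one' ℝ)] with r hr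
    exact (if_pos (le_of_lt hr)).symm
  · exact (hasDerivAt_hittingTime hα h).continuousAt.continuousWithinAt

lemma radialProfile_of_nonpos (hα : α < 1) {τ : ℝ} (h : τ ≤ 0) : radialProfile α τ = 0 := by
  have hpos : 0 < (1 - α)⁻¹ := inv_pos.2 (by linarith)
  rw [radialProfile, if_pos (by linarith), max_eq_right h, mul_zero, Real.zero_rpow hpos.ne']

lemma radialProfile_pos (hα : α < 1) {τ : ℝ} (h : 0 < τ) : 0 < radialProfile α τ := by
  have hpos : 0 < 1 - α := by linarith
  unfold radialProfile
  split_ifs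
  · rw [max_eq_left h.le]; positivity
  · positivity

lemma continuous_radialProfile (hα : α < 1) : Continuous (radialProfile α) := by
  have hpos : 0 < 1 - α := by linarith
  refine Continuous.if_le ?_ (by fun_prop) continuous_id continuous_const ?_
  · exact Continuous.rpow_const (by fun_prop) fun _ => Or.inr (by positivity)
  · rintro τ rfl
    have : 0 ≤ (1 - α)⁻¹ := by positivity
    simp [max_eq_left this, hpos.ne']

lemma radialProfile_hittingTime (hα : α < 1) {r : ℝ} (h0 : 0 ≤ r) :
    radialProfile α (hittingTime α r) = r := by
  have hpos : 0 < 1 - α := by linarith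
  have hτ := hittingTime_nonneg hα h0
  unfold radialProfile
  rw [max_eq_left hτ]
  unfold hittingTime
  by_cases h : r ≤ 1
  · have h₁ : r ^ (1 - α) * (1 - α)⁻¹ ≤ 1 * (1 - α)⁻¹ := by
      gcongr
      exact Real.rpow_le_one h0 h hpos.le
    rw [if_pos h, if_pos (by linarith), mul_comm, inv_mul_cancel_right₀ hpos.ne',
      Real.rpow_rpow_inv h0 hpos.ne']
  · have h₁ := Real.log_pos (not_le.1 h)
    rw [if_neg h, if_neg (by linarith), add_sub_cancel_left, Real.exp_log (by linarith)]

lemma hasDerivAt_radialProfile (hα : α < 1) {τ : ℝ} (h : 0 < τ) :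
    HasDerivAt (radialProfile α) (inwardSpeed α (radialProfile α τ)) τ := by
  have hpos : 0 < 1 - α := by linarith
  have hc : 0 ≤ (1 - α)⁻¹ := by positivity
  refine hasDerivAt_ite_le (fun hle => ?_) (fun hle => ?_) (by simp [max_eq_left hc, hpos.ne'])
  · have hb : 0 < (1 - α) * τ := by positivity
    have hb1 : (1 - α) * τ ≤ 1 := by
      rwa [mul_comm, ← le_div_iff₀ hpos, one_div]
    have hval : radialProfile α τ = ((1 - α) * τ) ^ (1 - α)⁻¹ := by
      rw [radialProfile, if_pos hle, max_eq_left h.le]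
    rw [hval, inwardSpeed_of_le_one hα (by positivity) (Real.rpow_le_one hb.le hb1 hc),
      ← Real.rpow_mul hb.le]
    have hd : HasDerivAt (fun t => ((1 - α) * t) ^ (1 - α)⁻¹)
        (((1 - α) * τ) ^ ((1 - α)⁻¹ * α)) τ := by
      refine (((hasDerivAt_id τ).const_mul (1 - α)).rpow_const (p := (1 - α)⁻¹)
        (Or.inl hb.ne')).congr_deriv ?_
      rw [show (1 - α)⁻¹ * α = (1 - α)⁻¹ - 1 by field_simp; ring]
      simp [hpos.ne']
    refine hd.congr_of_eventuallyEq ?_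
    filter_upwards [Ioi_mem_nhds h] with t ht
    rw [max_eq_left (le_of_lt ht)]
  · have hval : radialProfile α τ = Real.exp (τ - (1 - α)⁻¹) := by
      rcases eq_or_lt_of_le hle with rfl | hlt
      · simp [radialProfile, max_eq_left hc, hpos.ne']
      · exact if_neg hlt.not_ge
    rw [hval, inwardSpeed_of_one_le hα (Real.one_le_exp (by linarith))]
    simpa using ((hasDerivAt_id τ).sub_const (1 - α)⁻¹).exp

end Scalar

section Drift

variable {d : ℕ} {α : ℝ}

lemma bIn_eq (hα : α < 1) (x : EuclideanSpace ℝ (Fin d)) :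
    bIn d α x = -(inwardSpeed α ‖x‖ • (‖x‖⁻¹ • x)) := by
  rcases eq_or_ne x 0 with rfl | hx
  · simp [bIn]
  have h0 : 0 < ‖x‖ := norm_pos_iff.2 hx
  unfold bIn
  split_ifs with h
  · rw [inwardSpeed_of_le_one hα h0 h, smul_smul, Real.rpow_sub_one h0.ne', div_eq_mul_inv]
  · rw [inwardSpeed_of_one_le hα (not_le.1 h).le, smul_inv_smul₀ h0.ne']

lemma continuousAt_bIn (hα : α < 1) {x : EuclideanSpace ℝ (Fin d)} (hx : x ≠ 0) :
    ContinuousAt (bIn d α) x := by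
  have h0 : 0 < ‖x‖ := norm_pos_iff.2 hx
  have h : bIn d α = fun x => -(inwardSpeed α ‖x‖ • (‖x‖⁻¹ • x)) := funext (bIn_eq hα)
  rw [h]
  have h₁ : ContinuousAt (fun x : EuclideanSpace ℝ (Fin d) => inwardSpeed α ‖x‖) x :=
    ContinuousAt.comp (f := fun x : EuclideanSpace ℝ (Fin d) => ‖x‖)
      (continuousAt_inwardSpeed h0) continuous_norm.continuousAt
  exact (h₁.smul ((continuous_norm.continuousAt.inv₀ h0.ne').smul continuousAt_id)).neg

variable {x₀ : EuclideanSpace ℝ (Fin d)} {y : ℝ → EuclideanSpace ℝ (Fin d)}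

lemma IsSolIn.apply_zero (hy : IsSolIn d α x₀ y) : y 0 = x₀ := by
  simpa using hy.2.2 0 le_rfl

lemma IsSolIn.hasDerivAt (hα : α < 1) (hy : IsSolIn d α x₀ y) {t : ℝ} (ht : 0 < t)
    (h : y t ≠ 0) : HasDerivAt y (bIn d α (y t)) t := by
  obtain ⟨hc, hi, he⟩ := hy
  have hcont : ContinuousAt (fun s => bIn d α (y s)) t :=
    ContinuousAt.comp (f := y) (continuousAt_bIn hα h) (hc.continuousAt (Ici_mem_nhds ht))
  have hmeas : StronglyMeasurableAtFilter (fun s => bIn d α (y s)) (𝓝 t) :=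
    ⟨Icc 0 (t + 1), Icc_mem_nhds ht (by linarith), (hi (t + 1) (by linarith)).1⟩
  have hint : IntervalIntegrable (fun s => bIn d α (y s)) volume 0 t :=
    (intervalIntegrable_iff_integrableOn_Icc_of_le ht.le).2 (hi t ht.le)
  refine ((intervalIntegral.integral_hasDerivAt_right hint hmeas hcont).const_add
    x₀).congr_of_eventuallyEq ?_
  filter_upwards [Ioi_mem_nhds ht] with s hs
  exact he s (le_of_lt hs)

lemma IsSolIn.hasDerivAt_norm (hα : α < 1) (hy : IsSolIn d α x₀ y) {t : ℝ} (ht : 0 < t)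
    (h : y t ≠ 0) : HasDerivAt (fun s => ‖y s‖) (-inwardSpeed α ‖y t‖) t := by
  have h0 : 0 < ‖y t‖ := norm_pos_iff.2 h
  have h₁ := (hy.hasDerivAt hα ht h).norm_sq.sqrt (by positivity)
  simp only [Real.sqrt_sq (norm_nonneg _)] at h₁
  convert h₁ using 1
  rw [bIn_eq hα, inner_neg_right, inner_smul_right, inner_smul_right, real_inner_self_eq_norm_sq]
  field_simp

/-- Away from the origin, the remaining time decreases at unit rate. -/
lemma IsSolIn.hittingTime_eq (hα : α < 1) (hy : IsSolIn d α x₀ y) {a b : ℝ} (ha : 0 ≤ a)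
    (hab : a ≤ b) (h : ∀ s ∈ Ioo a b, y s ≠ 0) :
    hittingTime α ‖y b‖ + b = hittingTime α ‖y a‖ + a := by
  refine eq_endpoints_of_hasDerivAt_zero (f := fun s => hittingTime α ‖y s‖ + s) hab ?_
    fun s hs => ?_
  · exact ((continuousOn_hittingTime hα).comp
      (hy.1.mono fun s hs => ha.trans hs.1).norm fun s _ => norm_nonneg _).add continuousOn_id
  · have h0 : 0 < ‖y s‖ := norm_pos_iff.2 (h s hs)
    have h₁ := ((hasDerivAt_hittingTime hα h0).comp s
      (hy.hasDerivAt_norm hα (ha.trans_lt hs.1) (h s hs))).add (hasDerivAt_id s)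
    refine h₁.congr_deriv ?_
    have := (inwardSpeed_pos (α := α) h0).ne'
    field_simp
    ring

/-- Away from the origin, the direction is constant. -/
lemma IsSolIn.direction_eq (hα : α < 1) (hy : IsSolIn d α x₀ y) {t : ℝ} (ht : 0 ≤ t)
    (h : ∀ s ∈ Icc 0 t, y s ≠ 0) : ‖y t‖⁻¹ • y t = ‖x₀‖⁻¹ • x₀ := by
  have hc : ContinuousOn y (Icc 0 t) := hy.1.mono fun s hs => hs.1
  have := eq_endpoints_of_hasDerivAt_zero (f := fun s => ‖y s‖⁻¹ • y s) ht
    ((hc.norm.inv₀ fun s hs => norm_ne_zero_iff.2 (h s hs)).smul hc) fun s hs => ?_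
  · simpa only [hy.apply_zero] using this
  · have hs0 := h s (Ioo_subset_Icc_self hs)
    have hn : ‖y s‖ ≠ 0 := norm_ne_zero_iff.2 hs0
    refine (((hy.hasDerivAt_norm hα hs.1 hs0).inv hn).smul
      (hy.hasDerivAt hα hs.1 hs0)).congr_deriv ?_
    simp only [Pi.inv_apply]
    rw [bIn_eq hα, smul_neg, smul_smul, smul_smul, ← neg_smul, ← add_smul]
    refine smul_eq_zero_of_left ?_ _
    field_simp
    ring

lemma IsSolIn.isCompact_zeros (hy : IsSolIn d α x₀ y) {a b : ℝ} (ha : 0 ≤ a) :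
    IsCompact (Icc a b ∩ y ⁻¹' {0}) :=
  isCompact_Icc.of_isClosed_subset
    ((hy.1.mono fun _ hs => ha.trans hs.1).preimage_isClosed_of_isClosed isClosed_Icc
      isClosed_singleton) inter_subset_left

lemma IsSolIn.eq_zero_of_le (hα : α < 1) (hy : IsSolIn d α x₀ y) {s t : ℝ} (hs : 0 ≤ s)
    (hst : s ≤ t) (h : y s = 0) : y t = 0 := by
  by_contra hne
  obtain ⟨m, ⟨⟨hsm, hmt⟩, hm⟩, hmax⟩ :=
    (hy.isCompact_zeros (b := t) hs).exists_isGreatest ⟨s, ⟨le_rfl, hst⟩, h⟩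
  have hm : y m = 0 := hm
  have hlt : m < t := lt_of_le_of_ne hmt (by rintro rfl; exact hne hm)
  have h₁ := hy.hittingTime_eq hα (hs.trans hsm) hmt fun r hr h0 =>
    hr.1.not_ge (hmax ⟨⟨hsm.trans hr.1.le, hr.2.le⟩, h0⟩)
  rw [hm, norm_zero, hittingTime_zero hα] at h₁
  linarith [hittingTime_nonneg hα (norm_nonneg (y t))]

lemma IsSolIn.apply_eq (hα : α < 1) (hy : IsSolIn d α x₀ y) {t : ℝ} (ht : 0 ≤ t) :
    y t = radialProfile α (hittingTime α ‖x₀‖ - t) • (‖x₀‖⁻¹ • x₀) := by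
  by_cases h : y t = 0
  · obtain ⟨m, ⟨⟨h0m, hmt⟩, hm⟩, hmin⟩ :=
      (hy.isCompact_zeros (b := t) le_rfl).exists_isLeast ⟨t, ⟨ht, le_rfl⟩, h⟩
    have hm : y m = 0 := hm
    have h₁ := hy.hittingTime_eq hα le_rfl h0m fun r hr h0 =>
      hr.2.not_ge (hmin ⟨⟨hr.1.le, hr.2.le.trans hmt⟩, h0⟩)
    rw [hm, norm_zero, hittingTime_zero hα, hy.apply_zero] at h₁
    rw [h, radialProfile_of_nonpos hα (by linarith), zero_smul]
  · have hne : ∀ s ∈ Icc 0 t, y s ≠ 0 := fun s hs h0 => h (hy.eq_zero_of_le hα hs.1 hs.2 h0)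
    have h₁ := hy.hittingTime_eq hα le_rfl ht fun s hs => hne s (Ioo_subset_Icc_self hs)
    rw [hy.apply_zero] at h₁
    rw [show hittingTime α ‖x₀‖ - t = hittingTime α ‖y t‖ by linarith,
      radialProfile_hittingTime hα (norm_nonneg _), ← hy.direction_eq hα ht hne,
      smul_inv_smul₀ (norm_ne_zero_iff.2 h)]

lemma isSolIn_radial (hα : α < 1) (x₀ : EuclideanSpace ℝ (Fin d)) :
    IsSolIn d α x₀ fun t => radialProfile α (hittingTime α ‖x₀‖ - t) • (‖x₀‖⁻¹ • x₀) := by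
  rcases eq_or_ne x₀ 0 with rfl | hx
  · refine ⟨by simpa using continuousOn_const, fun t _ => ?_, fun t _ => ?_⟩ <;> simp [bIn]
  have hn : ‖x₀‖ ≠ 0 := norm_ne_zero_iff.2 hx
  set T := hittingTime α ‖x₀‖ with hT
  set u := ‖x₀‖⁻¹ • x₀ with hu
  have hu1 : ‖u‖ = 1 := by simp [hu, norm_smul, hn]
  have hcont : Continuous fun t => radialProfile α (T - t) :=
    (continuous_radialProfile hα).comp (continuous_const.sub continuous_id)
  have hder : ∀ t < T, HasDerivAt (fun t => radialProfile α (T - t))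
      (-inwardSpeed α (radialProfile α (T - t))) t := fun t ht => by
    simpa using (hasDerivAt_radialProfile hα (sub_pos.2 ht)).comp_const_sub T t
  have hbefore : ∀ t < T, bIn d α (radialProfile α (T - t) • u) =
      (-inwardSpeed α (radialProfile α (T - t))) • u := fun t ht => by
    have hp := radialProfile_pos hα (sub_pos.2 ht)
    rw [bIn_eq hα, norm_smul, hu1, mul_one, Real.norm_of_nonneg hp.le, inv_smul_smul₀ hp.ne',
      neg_smul]
  have hafter : ∀ t, T ≤ t → radialProfile α (T - t) • u = 0 := fun t ht => by
    rw [radialProfile_of_nonpos hα (by linarith), zero_smul]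
  have hint₀ : IntegrableOn (fun t => bIn d α (radialProfile α (T - t) • u)) (Iio T ∩ Ioi 0) := by
    have h₁ : IntegrableOn (fun t => inwardSpeed α (radialProfile α (T - t))) (Ioc 0 T) := by
      refine intervalIntegral.integrableOn_deriv_of_nonneg
        (g := fun t => -radialProfile α (T - t)) hcont.neg.continuousOn (fun t ht => ?_)
        fun t ht => (inwardSpeed_pos (radialProfile_pos hα (sub_pos.2 ht.2))).le
      exact (hder t ht.2).neg.congr_deriv (neg_neg _)
    have h₂ : IntegrableOn (fun t => (-inwardSpeed α (radialProfile α (T - t))) • u)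
        (Iio T ∩ Ioi 0) :=
      IntegrableOn.mono_set (h₁.neg.smul_const u) fun t ht => ⟨ht.2, le_of_lt ht.1⟩
    exact h₂.congr_fun (fun t ht => (hbefore t ht.1).symm)
      (measurableSet_Iio.inter measurableSet_Ioi)
  have hint : ∀ t : ℝ, IntegrableOn (fun t => bIn d α (radialProfile α (T - t) • u)) (Icc 0 t) :=
    fun t => by
    rw [integrableOn_Icc_iff_integrableOn_Ioc]
    refine hint₀.of_forall_sdiff_eq_zero measurableSet_Ioc fun s hs => ?_
    have hs' : T ≤ s := not_lt.1 fun h => hs.2 ⟨h, hs.1.1⟩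
    rw [hafter s hs']
    simp [bIn]
  refine ⟨(hcont.smul continuous_const).continuousOn, fun t _ => hint t, fun t ht => ?_⟩
  have hFTC := integral_eq_of_hasDerivAt_off_countable_of_le
    (fun t => radialProfile α (T - t) • u) (fun t => bIn d α (radialProfile α (T - t) • u)) ht
    (countable_singleton T) (hcont.smul continuous_const).continuousOn (fun s hs => ?_)
    ((intervalIntegrable_iff_integrableOn_Icc_of_le ht).2 (hint t))
  · rw [hFTC]
    simp only [sub_zero]
    rw [hT, radialProfile_hittingTime hα (norm_nonneg _), hu, smul_inv_smul₀ hn]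
    abel
  · rcases lt_or_gt_of_ne (show s ≠ T from hs.2) with h | h
    · rw [hbefore s h]
      exact (hder s h).smul_const u
    · rw [hafter s h.le]
      have h₀ : bIn d α 0 = 0 := by simp [bIn]
      rw [h₀]
      refine (hasDerivAt_const s (0 : EuclideanSpace ℝ (Fin d))).congr_of_eventuallyEq ?_
      filter_upwards [Ioi_mem_nhds h] with r hr
      exact hafter r (le_of_lt hr)

end Drift

theorem inward_drift_wellposed_and_coalescence (d : ℕ) (hd : 1 ≤ d)
    (α : ℝ) (hα : α ∈ Ioo (-1 : ℝ) 1) (x₀ : EuclideanSpace ℝ (Fin d)) :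
    (∃ y, IsSolIn d α x₀ y) ∧
    (∀ y₁ y₂, IsSolIn d α x₀ y₁ → IsSolIn d α x₀ y₂ → EqOn y₁ y₂ (Ici 0)) ∧
    (∀ y, IsSolIn d α x₀ y →
      ∀ t : ℝ, max (Real.log ‖x₀‖) 0 + 1 / (1 - α) ≤ t → y t = 0) := by
  have hα₁ : α < 1 := hα.2
  refine ⟨⟨_, isSolIn_radial hα₁ x₀⟩, fun y₁ y₂ h₁ h₂ t ht => ?_, fun y hy t ht => ?_⟩
  · rw [h₁.apply_eq hα₁ ht, h₂.apply_eq hα₁ ht]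
  · have hle := (hittingTime_le hα₁ (norm_nonneg x₀)).trans ht
    have hT := hittingTime_nonneg hα₁ (norm_nonneg x₀)
    rw [hy.apply_eq hα₁ (hT.trans hle), radialProfile_of_nonpos hα₁ (by linarith), zero_smul]

end
end
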